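/- There exist absolute constants C₀ ≥ 1 and C ≥ 1 such that the following holds. Let p be a prime, A ⊆ F_p a finite nonempty set, K ≥ 1, and L a finite set of lines y = mx + b in F_p² with nonzero slopes m, such that |L| ≥ |A|, the number of incidences satisfies I(A×A, L) ≥ |A|·|L|/K, and |A|·|L|/K ≥ C₀·|A|^(1/2)·|L|·max{1, |A|/p^(1/2)}. Let B be the set of y-intercepts and D the set of slopes of the lines in L. Then either E⁺(A) ≥ |A|³/(C·K^C), E⁺(B) ≥ |A|·|L|²/(C·K^C) and E⁺(A,B) ≥ |A|·|L|²/(C·K^C); or there exists s ∈ F_p such that E^×(A−s) ≥ |A|³/(C·K^C), E^×(D) ≥ |A|·|L|²/(C·K^C) and E^×(A−s, D) ≥ |A|·|L|²/(C·K^C). -/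

import Mathlib

/-- Additive energy `E⁺(A,B) = #{(a,a',b,b') ∈ A×A×B×B : a − b = a' − b'}`. -/
noncomputable def addE (p : ℕ) (A B : Finset (ZMod p)) : ℕ :=
  Set.ncard {x : ZMod p × ZMod p × ZMod p × ZMod p |
    x.1 ∈ A ∧ x.2.1 ∈ A ∧ x.2.2.1 ∈ B ∧ x.2.2.2 ∈ B ∧ x.1 - x.2.2.1 = x.2.1 - x.2.2.2}

/-- Multiplicative energy `E^×(A,B) = #{(a,a',b,b') ∈ A×A×B×B : a·b' = a'·b}`. -/
noncomputable def mulE (p : ℕ) (A B : Finset (ZMod p)) : ℕ :=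
  Set.ncard {x : ZMod p × ZMod p × ZMod p × ZMod p |
    x.1 ∈ A ∧ x.2.1 ∈ A ∧ x.2.2.1 ∈ B ∧ x.2.2.2 ∈ B ∧ x.1 * x.2.2.2 = x.2.1 * x.2.2.1}

/-- The number of incidences between the grid `A×B` and the set of lines `L`
(a line is a pair (slope, y-intercept)). -/
noncomputable def inc (p : ℕ) (A B : Finset (ZMod p)) (L : Finset (ZMod p × ZMod p)) : ℕ :=
  Set.ncard {ql : (ZMod p × ZMod p) × ZMod p × ZMod p |
    ql.1.1 ∈ A ∧ ql.1.2 ∈ B ∧ ql.2 ∈ L ∧ ql.1.2 = ql.2.1 * ql.1.1 + ql.2.2}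

/-!
Regard a line of nonzero slope as an invertible affine map. By popularity, at least `|L| / 2K` of
the lines are *rich*, i.e. contain at least `|A| / 2K` points of `A × A`. By Cauchy–Schwarz the
quotients `l₁⁻¹ ∘ l₂` of rich lines are themselves rich on average, while there are only `O(|A|)`
rich lines (by the point–plane incidence bound if `|A|` is small compared with `p`, and by a second
moment over all lines otherwise), so `l₁⁻¹ ∘ l₂ = l₃⁻¹ ∘ l₄` has many solutions. Clearing
denominators turns the solutions into point–plane incidences in `F³`, so many that by the
point–plane bound a large family of the lines is collinear in the (slope, intercept) plane.
Such lines form a pencil. If they are parallel, with slope `m`, each intercept `b` satisfies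
`a' - b = m a` often, so `A` and the intercepts have large additive energy; if they pass through
`(s, t)`, each slope `m` satisfies `m (a - s) = a' - t` often, so `A - s` and the slopes have large
multiplicative energy.

The point–plane bound is Rudnev's. After a generic embedding into `E³`, with `E = F(θ)`, points and
planes become points that are conjugate for a null polarity exactly when they are incident, and
conjugate points have dual lines that meet or are parallel; the dual lines have directions
`(1, -u, u²)` on a conic. Some polynomial of degree `O(√N)` vanishes on all `N` dual lines. Along a
dual line crossed by many others, the difference of the directions `u` is a rational function of the
crossing parameter, and a Wronskian identity shows that its reciprocal is linear. Hence the points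
dual to the crossing lines are collinear.
-/

namespace IncidenceStructure

open Finset

section ConstantCoefficientDerivations

open MvPolynomial

variable {σ R : Type*} [CommRing R]

/-- The derivative along the constant vector field `a`. -/
noncomputable def constDeriv (a : σ → R) : Derivation R (MvPolynomial σ R) (MvPolynomial σ R) :=
  mkDerivation R fun i => C (a i)

lemma constDeriv_X (a : σ → R) (i : σ) : constDeriv a (X i) = C (a i) :=
  mkDerivation_X _ _ _

lemma constDeriv_comm (a b : σ → R) (G : MvPolynomial σ R) :
    constDeriv a (constDeriv b G) = constDeriv b (constDeriv a G) := by
  have bracket_eq_zero : ⁅constDeriv a, constDeriv b⁆ = 0 :=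
    derivation_ext fun i => by simp [Derivation.commutator_apply, constDeriv]
  simpa [Derivation.commutator_apply, sub_eq_zero] using DFunLike.congr_fun bracket_eq_zero G

lemma constDeriv_single [DecidableEq σ] (i : σ) :
    constDeriv (Pi.single i (1 : R)) = pderiv i :=
  derivation_ext fun j => by
    obtain rfl | hij := eq_or_ne i j
    · simp [constDeriv]
    · simp [constDeriv, hij.symm]

lemma pderiv_constDeriv (i : σ) (a : σ → R) (G : MvPolynomial σ R) :
    pderiv i (constDeriv a G) = constDeriv a (pderiv i G) := by
  classical
  rw [← constDeriv_single, constDeriv_comm]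

lemma pderiv_comm (i j : σ) (G : MvPolynomial σ R) :
    pderiv i (pderiv j G) = pderiv j (pderiv i G) := by
  classical
  rw [← constDeriv_single j, pderiv_constDeriv]

lemma constDeriv_eq_sum [Fintype σ] (a : σ → R) (G : MvPolynomial σ R) :
    constDeriv a G = ∑ i, C (a i) * pderiv i G := by
  classical
  induction G using MvPolynomial.induction_on with
  | C c => simp
  | add f g hf hg => simp only [map_add, hf, hg, mul_add, sum_add_distrib]
  | mul_X f i hf =>
    simp only [Derivation.leibniz, hf, constDeriv_X, smul_eq_mul, pderiv_X, mul_add,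
      sum_add_distrib, mul_left_comm (C _), ← mul_sum, Pi.single_apply, mul_ite, mul_one, mul_zero,
      sum_ite_eq, mem_univ, if_true]
    ring

lemma totalDegree_pderiv_le_sub_one (i : σ) (G : MvPolynomial σ R) :
    (pderiv i G).totalDegree ≤ G.totalDegree - 1 := by
  refine Finset.sup_le fun m hm => ?_
  rw [mem_support_iff, coeff_pderiv] at hm
  have shifted_mem : m + Finsupp.single i 1 ∈ G.support :=
    mem_support_iff.mpr (left_ne_zero_of_mul hm)
  have shifted_le := le_totalDegree shifted_mem
  rw [Finsupp.sum_add_index' (by simp) (by simp), Finsupp.sum_single_index rfl] at shifted_le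
  change (m.sum fun _ e => e) ≤ _
  omega

lemma totalDegree_pderiv_le (i : σ) (G : MvPolynomial σ R) :
    (pderiv i G).totalDegree ≤ G.totalDegree :=
  (totalDegree_pderiv_le_sub_one i G).trans (Nat.sub_le _ _)

lemma eq_C_of_forall_pderiv_eq_zero [IsDomain R] (p : ℕ) [CharP R p] {G : MvPolynomial σ R}
    (hdeg : G.totalDegree < p) (hG : ∀ i, pderiv i G = 0) : G = C (coeff 0 G) := by
  classical
  ext m
  rw [coeff_C]
  split_ifs with hm0
  · rw [hm0]
  by_contra hm
  obtain ⟨i, hi⟩ : ∃ i, m i ≠ 0 := by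
    by_contra! h
    exact hm0 (Finsupp.ext fun i => (h i).symm)
  have hmi : m - Finsupp.single i 1 + Finsupp.single i 1 = m :=
    tsub_add_cancel_of_le (by simpa using Nat.one_le_iff_ne_zero.mpr hi)
  have hcoeff := congrArg (coeff (m - Finsupp.single i 1)) (hG i)
  rw [coeff_pderiv, hmi, coeff_zero, ← Nat.cast_succ, Finsupp.tsub_apply, Finsupp.single_eq_same,
    Nat.succ_eq_add_one, Nat.sub_add_cancel (Nat.one_le_iff_ne_zero.mpr hi)] at hcoeff
  have p_dvd : p ∣ m i :=
    (CharP.cast_eq_zero_iff R p _).mp ((mul_eq_zero.mp hcoeff).resolve_left hm)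
  have le_degree : m i ≤ G.totalDegree :=
    (Finsupp.le_degree i m).trans (le_totalDegree (mem_support_iff.mpr hm))
  exact absurd (Nat.le_of_dvd (Nat.pos_of_ne_zero hi) p_dvd) (by omega)

lemma exists_map_pderiv_ne_zero {E A ι : Type*} [Field E] (p : ℕ) [CharP E p] [Ring A]
    [Nontrivial A] [Algebra E A] {s : Set ι} (hs : s.Nonempty) (φ : ι → MvPolynomial σ E →ₐ[E] A)
    {F : MvPolynomial σ E} (hF0 : F ≠ 0) (hdeg : F.totalDegree < p) (hF : ∀ i ∈ s, φ i F = 0) :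
    ∃ G : MvPolynomial σ E, G.totalDegree ≤ F.totalDegree ∧ (∀ i ∈ s, φ i G = 0) ∧
      ∃ i ∈ s, ∃ j, φ i (pderiv j G) ≠ 0 := by
  induction hn : F.totalDegree using Nat.strong_induction_on generalizing F with | _ n ih
  subst hn
  by_cases hpderiv : ∃ i ∈ s, ∃ j, φ i (pderiv j F) ≠ 0
  · exact ⟨F, le_rfl, hF, hpderiv⟩
  push Not at hpderiv
  have ne_C (c : E) : F ≠ C c := by
    rintro rfl
    obtain ⟨i, hi⟩ := hs
    have := hF i hi
    rw [← algebraMap_eq, AlgHom.commutes, map_eq_zero] at this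
    exact hF0 (by rw [this, C_0])
  obtain ⟨j, hj⟩ : ∃ j, pderiv j F ≠ 0 := by
    by_contra! h
    exact ne_C _ (eq_C_of_forall_pderiv_eq_zero p hdeg h)
  have degree_pos : F.totalDegree ≠ 0 := fun h => ne_C _ (totalDegree_eq_zero_iff_eq_C.mp h)
  have degree_lt := totalDegree_pderiv_le_sub_one j F
  obtain ⟨G, hG, hG'⟩ := ih _ (by omega) hj (by omega) (fun i hi => hpderiv i hi j) rfl
  exact ⟨G, by omega, hG'⟩

end ConstantCoefficientDerivations

section RestrictLine

open MvPolynomial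

variable {σ R : Type*} [CommRing R]

/-- Restriction of polynomial functions to the line `ρ ↦ x + ρ a`. -/
noncomputable def restrictLine (x a : σ → R) : MvPolynomial σ R →ₐ[R] Polynomial R :=
  aeval fun i => Polynomial.C (a i) * Polynomial.X + Polynomial.C (x i)

lemma restrictLine_C (x a : σ → R) (c : R) : restrictLine x a (C c) = Polynomial.C c := by
  simp [restrictLine]

lemma eval_restrictLine (x a : σ → R) (ρ : R) (G : MvPolynomial σ R) :
    (restrictLine x a G).eval ρ = MvPolynomial.eval (x + ρ • a) G := by
  have hcomp : (Polynomial.aeval ρ).comp (restrictLine x a) = aeval (x + ρ • a) :=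
    algHom_ext fun i => by simp [restrictLine]; ring
  simpa [Polynomial.coe_aeval_eq_eval, MvPolynomial.coe_aeval_eq_eval] using
    DFunLike.congr_fun hcomp G

lemma natDegree_restrictLine_le (x a : σ → R) (G : MvPolynomial σ R) :
    (restrictLine x a G).natDegree ≤ G.totalDegree := by
  simpa [restrictLine] using aeval_natDegree_le G le_rfl _ fun _ => Polynomial.natDegree_linear_le

lemma derivative_restrictLine (x a : σ → R) (G : MvPolynomial σ R) :
    Polynomial.derivative (restrictLine x a G) = restrictLine x a (constDeriv a G) := by
  induction G using MvPolynomial.induction_on with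
  | C c => simp
  | add f g hf hg => simp only [map_add, hf, hg]
  | mul_X f i hf =>
    have derivative_X : Polynomial.derivative (restrictLine x a (X i)) = Polynomial.C (a i) := by
      simp [restrictLine]
    simp only [map_mul, Polynomial.derivative_mul, hf, derivative_X, Derivation.leibniz,
      smul_eq_mul, map_add, constDeriv_X, restrictLine_C]
    ring

end RestrictLine

section Wronskian

open Polynomial

variable {E : Type*} [Field E] (p : ℕ) [CharP E p]

lemma natDegree_X_mul_derivative_le {R : Type*} [Semiring R] (f : R[X]) :
    (X * derivative f).natDegree ≤ f.natDegree := by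
  rcases Nat.eq_zero_or_pos f.natDegree with hf | hf
  · simp [derivative_of_natDegree_zero hf]
  · have := (natDegree_mul_le (p := X) (q := derivative f)).trans
      (add_le_add natDegree_X_le (natDegree_derivative_le f))
    omega

lemma coeff_X_mul_derivative {R : Type*} [CommSemiring R] (f : R[X]) :
    (X * derivative f).coeff f.natDegree = f.natDegree * f.leadingCoeff := by
  rcases hn : f.natDegree with _ | n
  · simp
  · rw [coeff_X_mul, coeff_derivative, leadingCoeff, hn]
    push_cast
    ring

lemma natDegree_eq_of_wronskian_eq_zero {f g : E[X]} (hf : f ≠ 0) (hg : g ≠ 0)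
    (hfp : f.natDegree < p) (hgp : g.natDegree < p) (hW : wronskian f g = 0) :
    f.natDegree = g.natDegree := by
  have hWX : f * (X * derivative g) = X * derivative f * g := by
    rw [wronskian] at hW
    linear_combination X * hW
  have top_coeff := congrArg (fun h : E[X] => h.coeff (f.natDegree + g.natDegree)) hWX
  simp only [coeff_mul_add_eq_of_natDegree_le le_rfl (natDegree_X_mul_derivative_le g),
    coeff_mul_add_eq_of_natDegree_le (natDegree_X_mul_derivative_le f) le_rfl,
    coeff_X_mul_derivative, coeff_natDegree] at top_coeff
  refine CharP.natCast_injOn_Iio E p hfp hgp (mul_right_cancel₀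
    (mul_ne_zero (leadingCoeff_ne_zero.mpr hf) (leadingCoeff_ne_zero.mpr hg)) ?_)
  linear_combination -top_coeff

lemma exists_eq_C_mul_of_wronskian_eq_zero {f g : E[X]} (hg : g ≠ 0)
    (hfp : f.natDegree < p) (hgp : g.natDegree < p) (hW : wronskian f g = 0) :
    ∃ l : E, f = C l * g := by
  rcases eq_or_ne f 0 with rfl | hf
  · exact ⟨0, by simp⟩
  have natDegree_eq := natDegree_eq_of_wronskian_eq_zero p hf hg hfp hgp hW
  set l := f.leadingCoeff / g.leadingCoeff with hl
  have hl0 : l ≠ 0 := div_ne_zero (leadingCoeff_ne_zero.mpr hf) (leadingCoeff_ne_zero.mpr hg)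
  refine ⟨l, sub_eq_zero.mp ?_⟩
  by_contra hne
  have degree_lt : (f - C l * g).degree < f.degree := by
    refine degree_sub_lt_left ?_ hf ?_
    · rw [degree_C_mul hl0, degree_eq_natDegree hf, degree_eq_natDegree hg, natDegree_eq]
    · rw [leadingCoeff_mul, leadingCoeff_C, hl, div_mul_cancel₀ _ (leadingCoeff_ne_zero.mpr hg)]
  have natDegree_lt := natDegree_lt_natDegree hne degree_lt
  have wronskian_sub : wronskian (f - C l * g) g = 0 := by
    simp only [wronskian, derivative_sub, derivative_mul, derivative_C] at hW ⊢
    linear_combination hW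
  have := natDegree_eq_of_wronskian_eq_zero p hne hg (natDegree_lt.trans hfp) hgp wronskian_sub
  omega

lemma exists_eq_linear_mul {f g : E[X]} {d : ℕ} (hf0 : f ≠ 0) (hf : f.natDegree ≤ d)
    (hg : g.natDegree ≤ d) (hp : 2 * d + 1 < p)
    (hW : f * derivative (wronskian f g) = 2 * derivative f * wronskian f g) :
    ∃ l k : E, g = (C l * X + C k) * f := by
  have natDegree_wronskian : (wronskian f g).natDegree ≤ 2 * d := by
    have hf' := natDegree_derivative_le f
    have hg' := natDegree_derivative_le g
    refine (natDegree_sub_le_of_le (natDegree_mul_le_of_le hf (hg'.trans (Nat.sub_le _ _)))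
      (natDegree_mul_le_of_le (hf'.trans (Nat.sub_le _ _)) hg)).trans ?_
    omega
  obtain ⟨l, hl⟩ : ∃ l : E, wronskian f g = C l * f ^ 2 := by
    refine exists_eq_C_mul_of_wronskian_eq_zero p (pow_ne_zero 2 hf0) (by omega)
      ((natDegree_pow_le_of_le 2 hf).trans_lt (by omega)) ?_
    rw [wronskian, derivative_sq, C_ofNat]
    linear_combination -f * hW
  obtain ⟨k, hk⟩ : ∃ k : E, g - C l * X * f = C k * f := by
    have natDegree_linear_mul : (C l * X * f).natDegree ≤ 1 + d :=
      natDegree_mul_le_of_le (by compute_degree) hf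
    refine exists_eq_C_mul_of_wronskian_eq_zero p hf0
      ((natDegree_sub_le_of_le hg natDegree_linear_mul).trans_lt ?_) (by omega) ?_
    · omega
    · simp only [wronskian, derivative_sub, derivative_mul, derivative_C, derivative_X] at hl ⊢
      linear_combination -hl
  exact ⟨l, k, by linear_combination hk⟩

end Wronskian

section DualLines

open MvPolynomial

variable {E : Type*} [Field E]

/-- The direction vector `(1, -u, u²)`; these vectors trace a conic in the plane at infinity. -/
def conicDir (u : E) : Fin 3 → E := ![1, -u, u ^ 2]

/-- The point with first coordinate `ρ` on the line dual to `q = (x, y, z)`, which is the line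
through `(0, y, z - x y)` in the direction `conicDir x`. -/
def dualPoint (q : E × E × E) (ρ : E) : Fin 3 → E :=
  ![0, q.2.1, q.2.2 - q.1 * q.2.1] + ρ • conicDir q.1

/-- Restriction of a polynomial function to the line dual to `q`, parametrised by the first
coordinate. -/
noncomputable def restrictDual (q : E × E × E) : MvPolynomial (Fin 3) E →ₐ[E] Polynomial E :=
  restrictLine ![0, q.2.1, q.2.2 - q.1 * q.2.1] (conicDir q.1)

/-- Conjugacy of points of `E³` for the null polarity of the form `dz + x dy - y dx`. For points
with different first coordinates it says that the dual lines meet. -/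
def Conj (q q' : E × E × E) : Prop := q.2.2 - q'.2.2 = q.1 * q'.2.1 - q'.1 * q.2.1

/-- The parameter at which the dual lines of two conjugate points with different first coordinates
meet. -/
def meetParam (q q' : E × E × E) : E := (q.2.1 - q'.2.1) / (q.1 - q'.1)

/-- The dual lines of the points of `T` meet the dual line of `q`, in pairwise distinct points. -/
structure MeetsDistinctly (q : E × E × E) (T : Finset (E × E × E)) : Prop where
  conj : ∀ q' ∈ T, Conj q q'
  fst_ne : ∀ q' ∈ T, q'.1 ≠ q.1
  injOn : Set.InjOn (meetParam q) T

lemma Conj.symm {q q' : E × E × E} (h : Conj q q') : Conj q' q := by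
  unfold Conj at *
  linear_combination -h

lemma restrictDual_C (q : E × E × E) (c : E) : restrictDual q (C c) = Polynomial.C c :=
  restrictLine_C _ _ _

lemma eval_restrictDual (q : E × E × E) (ρ : E) (G : MvPolynomial (Fin 3) E) :
    (restrictDual q G).eval ρ = MvPolynomial.eval (dualPoint q ρ) G :=
  eval_restrictLine _ _ _ _

lemma eval_eq_zero_of_restrictDual_eq_zero {q : E × E × E} {G : MvPolynomial (Fin 3) E}
    (hG : restrictDual q G = 0) (ρ : E) : MvPolynomial.eval (dualPoint q ρ) G = 0 := by
  rw [← eval_restrictDual, hG, Polynomial.eval_zero]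

lemma natDegree_restrictDual_le (q : E × E × E) (G : MvPolynomial (Fin 3) E) :
    (restrictDual q G).natDegree ≤ G.totalDegree :=
  natDegree_restrictLine_le _ _ _

lemma derivative_restrictDual (q : E × E × E) (G : MvPolynomial (Fin 3) E) :
    Polynomial.derivative (restrictDual q G) = restrictDual q (constDeriv (conicDir q.1) G) :=
  derivative_restrictLine _ _ _

lemma restrictDual_constDeriv_eq_zero {q : E × E × E} {G : MvPolynomial (Fin 3) E}
    (hG : restrictDual q G = 0) : restrictDual q (constDeriv (conicDir q.1) G) = 0 := by
  rw [← derivative_restrictDual, hG, Polynomial.derivative_zero]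

lemma meetParam_mul_sub {q q' : E × E × E} (hne : q'.1 ≠ q.1) :
    meetParam q q' * (q.1 - q'.1) = q.2.1 - q'.2.1 :=
  div_mul_cancel₀ _ (sub_ne_zero.mpr hne.symm)

lemma dualPoint_meetParam {q q' : E × E × E} (h : Conj q q') (hne : q'.1 ≠ q.1) :
    dualPoint q' (meetParam q q') = dualPoint q (meetParam q q') := by
  have hmeet := meetParam_mul_sub hne
  unfold Conj at h
  ext i
  fin_cases i <;> simp only [dualPoint, conicDir, Pi.add_apply, Pi.smul_apply, smul_eq_mul,
    Fin.zero_eta, Fin.mk_one, Fin.reduceFinMk, Matrix.cons_val]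
  · linear_combination hmeet
  · linear_combination -h - (q.1 + q'.1) * hmeet

lemma conj_of_dualPoint_eq {q q' : E × E × E} {ρ : E} (h : dualPoint q ρ = dualPoint q' ρ) :
    Conj q q' := by
  have h₁ := congrFun h 1
  have h₂ := congrFun h 2
  simp only [dualPoint, conicDir, Pi.add_apply, Pi.smul_apply, smul_eq_mul,
    Matrix.cons_val] at h₁ h₂
  unfold Conj
  linear_combination h₂ + (q.1 + q'.1) * h₁

lemma conj_of_meetParam_eq {q q₁ q₂ : E × E × E} (h₁ : Conj q q₁) (h₂ : Conj q q₂)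
    (hne₁ : q₁.1 ≠ q.1) (hne₂ : q₂.1 ≠ q.1) (h : meetParam q q₁ = meetParam q q₂) :
    Conj q₁ q₂ := by
  apply conj_of_dualPoint_eq (ρ := meetParam q q₁)
  rw [dualPoint_meetParam h₁ hne₁, h, dualPoint_meetParam h₂ hne₂]

lemma conj_of_fst_eq {q q₁ q₂ : E × E × E} (h₁ : Conj q q₁) (h₂ : Conj q q₂)
    (heq₁ : q₁.1 = q.1) (heq₂ : q₂.1 = q.1) : Conj q₁ q₂ := by
  unfold Conj at *
  rw [heq₁] at h₁ ⊢
  rw [heq₂] at h₂ ⊢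
  linear_combination h₂ - h₁

namespace MeetsDistinctly

variable {q : E × E × E} {T : Finset (E × E × E)}

lemma mono {T' : Finset (E × E × E)} (hT : MeetsDistinctly q T) (hT' : T' ⊆ T) :
    MeetsDistinctly q T' where
  conj q' hq' := hT.conj q' (hT' hq')
  fst_ne q' hq' := hT.fst_ne q' (hT' hq')
  injOn := hT.injOn.mono (mod_cast hT')

lemma dualPoint_eq (hT : MeetsDistinctly q T) {q' : E × E × E} (hq' : q' ∈ T) :
    dualPoint q' (meetParam q q') = dualPoint q (meetParam q q') :=
  dualPoint_meetParam (hT.conj q' hq') (hT.fst_ne q' hq')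

lemma eq_zero_of_natDegree_lt (hT : MeetsDistinctly q T) {f : Polynomial E}
    (hdeg : f.natDegree < #T) (hf : ∀ q' ∈ T, f.eval (meetParam q q') = 0) : f = 0 := by
  classical
  refine Polynomial.eq_zero_of_natDegree_lt_card_of_eval_eq_zero' f (T.image (meetParam q)) ?_ ?_
  · simpa only [Finset.forall_mem_image] using hf
  · rwa [Finset.card_image_of_injOn hT.injOn]

lemma restrictDual_eq_zero (hT : MeetsDistinctly q T) {G : MvPolynomial (Fin 3) E}
    (hdeg : G.totalDegree < #T) (hG : ∀ q' ∈ T, restrictDual q' G = 0) : restrictDual q G = 0 := by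
  refine hT.eq_zero_of_natDegree_lt ((natDegree_restrictDual_le q G).trans_lt hdeg) fun q' hq' => ?_
  rw [eval_restrictDual, ← hT.dualPoint_eq hq']
  exact eval_eq_zero_of_restrictDual_eq_zero (hG q' hq') _

lemma eval_eq_zero_of_restrictDual (hT : MeetsDistinctly q T) {q' : E × E × E} (hq' : q' ∈ T)
    {G : MvPolynomial (Fin 3) E} (hG : restrictDual q' G = 0) :
    MvPolynomial.eval (dualPoint q (meetParam q q')) G = 0 := by
  rw [← hT.dualPoint_eq hq']
  exact eval_eq_zero_of_restrictDual_eq_zero hG _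

end MeetsDistinctly

end DualLines

section AsymptoticForm

open MvPolynomial

variable {E : Type*} [Field E]

lemma constDeriv_conicDir (u : E) (G : MvPolynomial (Fin 3) E) :
    constDeriv (conicDir u) G = pderiv 0 G - C u * pderiv 1 G + C (u ^ 2) * pderiv 2 G := by
  simp only [constDeriv_eq_sum, Fin.sum_univ_three, conicDir, Matrix.cons_val, map_one, map_neg]
  ring

lemma constDeriv_conicDir_sub (u v : E) (G : MvPolynomial (Fin 3) E) :
    constDeriv (conicDir v) G =
      constDeriv (conicDir u) G + C (u - v) * (pderiv 1 G - C (u + v) * pderiv 2 G) := by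
  simp only [constDeriv_conicDir, map_sub, map_add, map_pow]
  ring

lemma constDeriv_conicDir_twice (u : E) (G : MvPolynomial (Fin 3) E) :
    constDeriv (conicDir u) (constDeriv (conicDir u) G) =
      pderiv 0 (pderiv 0 G) - 2 * C u * pderiv 0 (pderiv 1 G)
        + C u ^ 2 * (pderiv 1 (pderiv 1 G) + 2 * pderiv 0 (pderiv 2 G))
        - 2 * C u ^ 3 * pderiv 1 (pderiv 2 G) + C u ^ 4 * pderiv 2 (pderiv 2 G) := by
  simp only [constDeriv_conicDir, map_add, map_sub, pderiv_C_mul, pderiv_comm (1 : Fin 3) 0,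
    pderiv_comm (2 : Fin 3) 0, pderiv_comm (2 : Fin 3) 1]
  simp only [map_pow]
  ring

/-- With `c = ∂₂F` and `w = ∂₁F - u c`, this is `c⁴` times the second derivative of `F` along
`conicDir (w / c)`. Where a line on the surface `F = 0` of direction `conicDir u` meets another such
line of direction `conicDir v`, one has `w / c = v`. -/
noncomputable def asymptoticForm (u : E) (F : MvPolynomial (Fin 3) E) : MvPolynomial (Fin 3) E :=
  let c := pderiv 2 F
  let w := pderiv 1 F - C u * c
  c ^ 4 * pderiv 0 (pderiv 0 F) - 2 * c ^ 3 * w * pderiv 0 (pderiv 1 F)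
    + c ^ 2 * w ^ 2 * (pderiv 1 (pderiv 1 F) + 2 * pderiv 0 (pderiv 2 F))
    - 2 * c * w ^ 3 * pderiv 1 (pderiv 2 F) + w ^ 4 * pderiv 2 (pderiv 2 F)

lemma eval_asymptoticForm {P : Fin 3 → E} {u v : E} {F : MvPolynomial (Fin 3) E}
    (h : eval P (pderiv 1 F) = (u + v) * eval P (pderiv 2 F)) :
    eval P (asymptoticForm u F) = eval P (pderiv 2 F) ^ 4 *
      eval P (constDeriv (conicDir v) (constDeriv (conicDir v) F)) := by
  simp only [asymptoticForm, constDeriv_conicDir_twice, map_add, map_sub, map_mul, map_pow,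
    eval_C, map_ofNat, h]
  ring

lemma eval_constDeriv_asymptoticForm {P : Fin 3 → E} {u v : E} {F : MvPolynomial (Fin 3) E}
    (h : eval P (pderiv 1 F) = (u + v) * eval P (pderiv 2 F))
    (hu : eval P (constDeriv (conicDir u) (constDeriv (conicDir u) F)) = 0) :
    eval P (constDeriv (conicDir v) (asymptoticForm v F)) = eval P (pderiv 2 F) ^ 3 *
      (eval P (pderiv 2 F) * eval P (constDeriv (conicDir v)
          (constDeriv (conicDir u) (constDeriv (conicDir u) F)))
        - 2 * eval P (constDeriv (conicDir v) (pderiv 1 F - C (u + v) * pderiv 2 F))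
          * eval P (constDeriv (conicDir u) (pderiv 1 F - C (2 * u) * pderiv 2 F))) := by
  have derivation_two (a : Fin 3 → E) : constDeriv a 2 = 0 := (constDeriv a).map_natCast 2
  have hbu (G : MvPolynomial (Fin 3) E) := constDeriv_conicDir u G
  rw [constDeriv_conicDir_twice] at hu ⊢
  simp only [asymptoticForm, map_add, map_sub, Derivation.leibniz, Derivation.leibniz_pow,
    derivation_C, derivation_two, smul_eq_mul, nsmul_eq_mul, hbu, pderiv_comm (2 : Fin 3) 1] at hu ⊢
  simp only [map_add, map_sub, map_mul, map_pow, eval_C, map_ofNat, h,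
    Nat.cast_ofNat, map_zero] at hu ⊢
  linear_combination 4 * eval P (pderiv 2 F) ^ 3 *
    eval P (constDeriv (conicDir v) (pderiv 2 F)) * hu

end AsymptoticForm

section TwoDirections

open MvPolynomial

variable {E : Type*} [Field E] {P : Fin 3 → E} {u v : E} {F : MvPolynomial (Fin 3) E}

lemma eval_pderiv_one_eq (huv : u ≠ v) (hu : eval P (constDeriv (conicDir u) F) = 0)
    (hv : eval P (constDeriv (conicDir v) F) = 0) :
    eval P (pderiv 1 F) = (u + v) * eval P (pderiv 2 F) := by
  rw [constDeriv_conicDir_sub u v, map_add, hu, zero_add, map_mul, eval_C, map_sub, map_mul,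
    eval_C] at hv
  exact sub_eq_zero.mp ((mul_eq_zero.mp hv).resolve_left (sub_ne_zero.mpr huv))

lemma eval_pderiv_zero_eq (huv : u ≠ v) (hu : eval P (constDeriv (conicDir u) F) = 0)
    (hv : eval P (constDeriv (conicDir v) F) = 0) :
    eval P (pderiv 0 F) = u * v * eval P (pderiv 2 F) := by
  have h₁ := eval_pderiv_one_eq huv hu hv
  simp only [constDeriv_conicDir, map_add, map_sub, map_mul, eval_C, h₁] at hu
  linear_combination hu

lemma eval_constDeriv_transversal (huv : u ≠ v)
    (hu : eval P (constDeriv (conicDir u) (constDeriv (conicDir u) F)) = 0)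
    (hv : eval P (constDeriv (conicDir v) (constDeriv (conicDir v) F)) = 0) :
    eval P (constDeriv (conicDir v) (pderiv 1 F - C (u + v) * pderiv 2 F)) =
      -eval P (constDeriv (conicDir u) (pderiv 1 F - C (u + v) * pderiv 2 F)) := by
  have second_deriv : constDeriv (conicDir v) (constDeriv (conicDir v) F) =
      constDeriv (conicDir u) (constDeriv (conicDir u) F) + C (u - v) *
        (constDeriv (conicDir u) (pderiv 1 F - C (u + v) * pderiv 2 F)
          + constDeriv (conicDir v) (pderiv 1 F - C (u + v) * pderiv 2 F)) := by
    have leibniz_C (w : E) (a : E) (G : MvPolynomial (Fin 3) E) :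
        constDeriv (conicDir w) (C a * G) = C a * constDeriv (conicDir w) G := by
      simp [Derivation.leibniz]
    conv_lhs => rw [constDeriv_conicDir_sub u v F, map_add, leibniz_C,
      constDeriv_comm _ (conicDir u), constDeriv_conicDir_sub u v F, map_add, leibniz_C]
    ring
  rw [second_deriv, map_add, hu, zero_add, map_mul, eval_C, map_add] at hv
  linear_combination (mul_eq_zero.mp hv).resolve_left (sub_ne_zero.mpr huv)

lemma constDeriv_constDeriv_twice (u v : E) (F : MvPolynomial (Fin 3) E) :
    constDeriv (conicDir v) (constDeriv (conicDir u) (constDeriv (conicDir u) F)) =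
      constDeriv (conicDir u) (constDeriv (conicDir u) (constDeriv (conicDir u) F)) +
        C (u - v) * constDeriv (conicDir u) (constDeriv (conicDir u)
          (pderiv 1 F - C (u + v) * pderiv 2 F)) := by
  rw [constDeriv_conicDir_sub u v]
  simp only [pderiv_constDeriv, map_sub, Derivation.leibniz, derivation_C, smul_eq_mul, mul_zero,
    add_zero]

lemma eval_asymptotic_equation (huv : u ≠ v)
    (h : eval P (pderiv 1 F) = (u + v) * eval P (pderiv 2 F))
    (hu : eval P (constDeriv (conicDir u) (constDeriv (conicDir u) F)) = 0)
    (hv : eval P (constDeriv (conicDir v) (constDeriv (conicDir v) F)) = 0)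
    (hu₃ : eval P (constDeriv (conicDir u)
      (constDeriv (conicDir u) (constDeriv (conicDir u) F))) = 0)
    (hform : eval P (constDeriv (conicDir v) (asymptoticForm v F)) = 0) :
    eval P (pderiv 2 F) * ((u - v) * eval P (pderiv 2 F) *
        eval P (constDeriv (conicDir u) (constDeriv (conicDir u)
          (pderiv 1 F - C (u + v) * pderiv 2 F)))
      + 2 * eval P (constDeriv (conicDir u) (pderiv 1 F - C (u + v) * pderiv 2 F))
        * eval P (constDeriv (conicDir u) (pderiv 1 F - C (2 * u) * pderiv 2 F))) = 0 := by
  rw [eval_constDeriv_asymptoticForm h hu, constDeriv_constDeriv_twice, map_add, hu₃, zero_add,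
    map_mul, eval_C, eval_constDeriv_transversal huv hu hv] at hform
  rcases mul_eq_zero.mp hform with hc | hrest
  · rw [eq_zero_of_pow_eq_zero hc, zero_mul]
  · linear_combination eval P (pderiv 2 F) * hrest

end TwoDirections

section LineOnSurface

open MvPolynomial

variable {E : Type*} [Field E]

/-- The derivative `∂₂F` along the dual line of `q`: the denominator of the slope at which another
dual line on the surface `F = 0` crosses it. -/
noncomputable def slopeDen (q : E × E × E) (F : MvPolynomial (Fin 3) E) : Polynomial E :=
  restrictDual q (pderiv 2 F)

/-- The numerator of the slope: at the point where the dual line of `q'` crosses that of `q`, the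
quotient of `slopeNum q F` by `slopeDen q F` is `q'.1 - q.1`. -/
noncomputable def slopeNum (q : E × E × E) (F : MvPolynomial (Fin 3) E) : Polynomial E :=
  restrictDual q (pderiv 1 F - C (2 * q.1) * pderiv 2 F)

lemma natDegree_restrictDual_pderiv_le (q : E × E × E) (i : Fin 3) (F : MvPolynomial (Fin 3) E) :
    (restrictDual q (pderiv i F)).natDegree ≤ F.totalDegree :=
  (natDegree_restrictDual_le q _).trans (totalDegree_pderiv_le i F)

lemma natDegree_restrictDual_pderiv_pderiv_le (q : E × E × E) (i j : Fin 3)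
    (F : MvPolynomial (Fin 3) E) :
    (restrictDual q (pderiv i (pderiv j F))).natDegree ≤ F.totalDegree :=
  (natDegree_restrictDual_pderiv_le q i _).trans (totalDegree_pderiv_le j F)

lemma natDegree_slopeDen_le (q : E × E × E) (F : MvPolynomial (Fin 3) E) :
    (slopeDen q F).natDegree ≤ F.totalDegree :=
  natDegree_restrictDual_pderiv_le q 2 F

lemma natDegree_slopeNum_le (q : E × E × E) (F : MvPolynomial (Fin 3) E) :
    (slopeNum q F).natDegree ≤ F.totalDegree := by
  have h₁ := natDegree_restrictDual_pderiv_le q 1 F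
  have h₂ := natDegree_restrictDual_pderiv_le q 2 F
  rw [slopeNum, map_sub, map_mul, restrictDual_C]
  compute_degree
  exact max_le h₁ h₂

lemma natDegree_restrictDual_asymptoticForm_le (q : E × E × E) (u : E)
    (F : MvPolynomial (Fin 3) E) :
    (restrictDual q (asymptoticForm u F)).natDegree ≤ 5 * F.totalDegree := by
  have h₁ (i : Fin 3) := natDegree_restrictDual_pderiv_le q i F
  have h₂ (i j : Fin 3) := natDegree_restrictDual_pderiv_pderiv_le q i j F
  simp only [asymptoticForm, map_add, map_sub, map_mul, map_pow, map_ofNat,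
    restrictDual_C]
  compute_degree
  have := h₁ 1; have := h₁ 2; have := h₂ 0 0; have := h₂ 0 1; have := h₂ 0 2; have := h₂ 1 1
  have := h₂ 1 2; have := h₂ 2 2
  omega

namespace MeetsDistinctly

variable {q : E × E × E} {T : Finset (E × E × E)} {F : MvPolynomial (Fin 3) E}

section Crossing

variable (hT : MeetsDistinctly q T) (hq : restrictDual q F = 0) {q' : E × E × E} (hq' : q' ∈ T)
  (hF : restrictDual q' F = 0)

include hT hq hq' hF

lemma eval_pderiv_one :
    eval (dualPoint q (meetParam q q')) (pderiv 1 F) =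
      (q.1 + q'.1) * eval (dualPoint q (meetParam q q')) (pderiv 2 F) :=
  eval_pderiv_one_eq (hT.fst_ne q' hq').symm
    (eval_eq_zero_of_restrictDual_eq_zero (restrictDual_constDeriv_eq_zero hq) _)
    (hT.eval_eq_zero_of_restrictDual hq' (restrictDual_constDeriv_eq_zero hF))

lemma eval_pderiv_zero :
    eval (dualPoint q (meetParam q q')) (pderiv 0 F) =
      q.1 * q'.1 * eval (dualPoint q (meetParam q q')) (pderiv 2 F) :=
  eval_pderiv_zero_eq (hT.fst_ne q' hq').symm
    (eval_eq_zero_of_restrictDual_eq_zero (restrictDual_constDeriv_eq_zero hq) _)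
    (hT.eval_eq_zero_of_restrictDual hq' (restrictDual_constDeriv_eq_zero hF))

lemma eval_slopeNum :
    (slopeNum q F).eval (meetParam q q') =
      (q'.1 - q.1) * (slopeDen q F).eval (meetParam q q') := by
  rw [slopeNum, slopeDen, eval_restrictDual, eval_restrictDual, map_sub, map_mul, eval_C,
    hT.eval_pderiv_one hq hq' hF]
  ring

lemma eval_slope_equation (hform : restrictDual q' (asymptoticForm q'.1 F) = 0) :
    (slopeNum q F * Polynomial.derivative (Polynomial.wronskian (slopeNum q F) (slopeDen q F))
      - 2 * Polynomial.derivative (slopeNum q F) *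
        Polynomial.wronskian (slopeNum q F) (slopeDen q F)).eval (meetParam q q') = 0 := by
  have hq₂ := restrictDual_constDeriv_eq_zero (restrictDual_constDeriv_eq_zero hq)
  have hF₂ := restrictDual_constDeriv_eq_zero (restrictDual_constDeriv_eq_zero hF)
  have pointwise := eval_asymptotic_equation (hT.fst_ne q' hq').symm
    (hT.eval_pderiv_one hq hq' hF) (eval_eq_zero_of_restrictDual_eq_zero hq₂ _)
    (hT.eval_eq_zero_of_restrictDual hq' hF₂)
    (eval_eq_zero_of_restrictDual_eq_zero (restrictDual_constDeriv_eq_zero hq₂) _)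
    (hT.eval_eq_zero_of_restrictDual hq' (restrictDual_constDeriv_eq_zero hform))
  have slope := hT.eval_slopeNum hq hq' hF
  simp only [Polynomial.wronskian, Polynomial.derivative_sub, Polynomial.derivative_mul,
    Polynomial.eval_sub, Polynomial.eval_add, Polynomial.eval_mul, Polynomial.eval_ofNat, slope]
  simp only [slopeNum, slopeDen, derivative_restrictDual, eval_restrictDual]
  simp only [map_sub, Derivation.leibniz, derivation_C, smul_eq_mul, mul_zero, add_zero, map_mul,
    eval_C] at pointwise ⊢
  linear_combination pointwise

end Crossing

section ManyCrossings

variable (hT : MeetsDistinctly q T) (hq : restrictDual q F = 0)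
  (hF : ∀ q' ∈ T, restrictDual q' F = 0)

include hT hq hF

lemma restrictDual_asymptoticForm_eq_zero (hdeg : 5 * F.totalDegree < #T) :
    restrictDual q (asymptoticForm q.1 F) = 0 := by
  refine hT.eq_zero_of_natDegree_lt
    ((natDegree_restrictDual_asymptoticForm_le q q.1 F).trans_lt hdeg) fun q' hq' => ?_
  rw [eval_restrictDual, eval_asymptoticForm (hT.eval_pderiv_one hq hq' (hF q' hq')),
    hT.eval_eq_zero_of_restrictDual hq'
      (restrictDual_constDeriv_eq_zero (restrictDual_constDeriv_eq_zero (hF q' hq'))), mul_zero]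

lemma slope_equation (hdeg : 3 * F.totalDegree < #T)
    (hform : ∀ q' ∈ T, restrictDual q' (asymptoticForm q'.1 F) = 0) :
    slopeNum q F * Polynomial.derivative (Polynomial.wronskian (slopeNum q F) (slopeDen q F)) =
      2 * Polynomial.derivative (slopeNum q F) *
        Polynomial.wronskian (slopeNum q F) (slopeDen q F) := by
  refine sub_eq_zero.mp (hT.eq_zero_of_natDegree_lt (lt_of_le_of_lt ?_ hdeg)
    fun q' hq' => hT.eval_slope_equation hq hq' (hF q' hq') (hform q' hq'))
  have hnum := natDegree_slopeNum_le q F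
  have hden := natDegree_slopeDen_le q F
  have natDegree_derivative_le {f : Polynomial E} (hf : f.natDegree ≤ F.totalDegree) :
      (Polynomial.derivative f).natDegree ≤ F.totalDegree :=
    ((Polynomial.natDegree_derivative_le f).trans (Nat.sub_le _ _)).trans hf
  have := natDegree_derivative_le hnum
  have := natDegree_derivative_le hden
  have := natDegree_derivative_le (natDegree_derivative_le hnum)
  have := natDegree_derivative_le (natDegree_derivative_le hden)
  simp only [Polynomial.wronskian, Polynomial.derivative_sub, Polynomial.derivative_mul]
  compute_degree
  omega

lemma slopeDen_ne_zero (hdeg : F.totalDegree < #T) (hne : ∃ i, restrictDual q (pderiv i F) ≠ 0) :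
    slopeDen q F ≠ 0 := by
  intro hden
  obtain ⟨i, hi⟩ := hne
  refine hi (hT.eq_zero_of_natDegree_lt
    ((natDegree_restrictDual_pderiv_le q i F).trans_lt hdeg) fun q' hq' => ?_)
  have hden' := eval_eq_zero_of_restrictDual_eq_zero hden (meetParam q q')
  rw [eval_restrictDual]
  fin_cases i
  · exact (hT.eval_pderiv_zero hq hq' (hF q' hq')).trans (by rw [hden', mul_zero])
  · exact (hT.eval_pderiv_one hq hq' (hF q' hq')).trans (by rw [hden', mul_zero])
  · exact hden'

lemma slopeNum_ne_zero (hdeg : F.totalDegree < #T) (hden : slopeDen q F ≠ 0) :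
    slopeNum q F ≠ 0 := by
  intro hnum
  refine hden (hT.eq_zero_of_natDegree_lt ((natDegree_slopeDen_le q F).trans_lt hdeg)
    fun q' hq' => ?_)
  have slope := hT.eval_slopeNum hq hq' (hF q' hq')
  rw [hnum, Polynomial.eval_zero] at slope
  exact (mul_eq_zero.mp slope.symm).resolve_left (sub_ne_zero.mpr (hT.fst_ne q' hq'))

lemma exists_subset_plane {l k : E} (hden : slopeDen q F ≠ 0)
    (hlk : slopeDen q F = (Polynomial.C l * Polynomial.X + Polynomial.C k) * slopeNum q F) :
    ∃ T' ⊆ T, #T ≤ #T' + F.totalDegree ∧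
      ∀ q' ∈ T', l * (q'.2.1 - q.2.1) + k * (q'.1 - q.1) = 1 := by
  classical
  refine ⟨{q' ∈ T | (slopeDen q F).eval (meetParam q q') ≠ 0}, filter_subset _ _, ?_,
    fun q' hq' => ?_⟩
  · have zeros_le : #{q' ∈ T | ¬ (slopeDen q F).eval (meetParam q q') ≠ 0} ≤ F.totalDegree := by
      by_contra! hlt
      refine hden ((hT.mono (filter_subset _ _)).eq_zero_of_natDegree_lt
        ((natDegree_slopeDen_le q F).trans_lt hlt) fun q' hq' => ?_)
      exact by simpa using (mem_filter.mp hq').2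
    have := card_filter_add_card_filter_not (s := T)
      (fun q' => (slopeDen q F).eval (meetParam q q') ≠ 0)
    omega
  · obtain ⟨hq', hne⟩ := mem_filter.mp hq'
    have hval := congrArg (Polynomial.eval (meetParam q q')) hlk
    simp only [Polynomial.eval_mul, Polynomial.eval_add, Polynomial.eval_C, Polynomial.eval_X,
      hT.eval_slopeNum hq hq' (hF q' hq')] at hval
    apply mul_right_cancel₀ hne
    linear_combination -hval
      + l * (slopeDen q F).eval (meetParam q q') * meetParam_mul_sub (hT.fst_ne q' hq')

end ManyCrossings

end MeetsDistinctly

theorem exists_subset_plane_of_vanishing (p : ℕ) [CharP E p] {Q : Finset (E × E × E)}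
    {nbr : E × E × E → Finset (E × E × E)} {F : MvPolynomial (Fin 3) E} (hQ : Q.Nonempty)
    (hsub : ∀ q ∈ Q, nbr q ⊆ Q) (hmeet : ∀ q ∈ Q, MeetsDistinctly q (nbr q)) (hF0 : F ≠ 0)
    (hF : ∀ q ∈ Q, restrictDual q F = 0) (hcard : ∀ q ∈ Q, 5 * F.totalDegree < #(nbr q))
    (hp : 2 * F.totalDegree + 1 < p) :
    ∃ q ∈ Q, ∃ T ⊆ nbr q, #(nbr q) ≤ #T + F.totalDegree ∧
      ∃ l k : E, ∀ q' ∈ T, l * (q'.2.1 - q.2.1) + k * (q'.1 - q.1) = 1 := by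
  obtain ⟨G, hGF, hG, q, hq, hne⟩ := exists_map_pderiv_ne_zero p (s := (Q : Set (E × E × E)))
    (by simpa using hQ) restrictDual hF0 (by omega) hF
  have hGnbr : ∀ q ∈ Q, ∀ q' ∈ nbr q, restrictDual q' G = 0 :=
    fun q hq q' hq' => hG q' (hsub q hq hq')
  have hform (q) (hq : q ∈ Q) : restrictDual q (asymptoticForm q.1 G) = 0 :=
    (hmeet q hq).restrictDual_asymptoticForm_eq_zero (hG q hq) (hGnbr q hq)
      (by have := hcard q hq; omega)
  have hlt := hcard q hq
  have hden := (hmeet q hq).slopeDen_ne_zero (hG q hq) (hGnbr q hq) (by omega) hne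
  have hnum := (hmeet q hq).slopeNum_ne_zero (hG q hq) (hGnbr q hq) (by omega) hden
  obtain ⟨l, k, hlk⟩ := exists_eq_linear_mul p hnum (natDegree_slopeNum_le q G)
    (natDegree_slopeDen_le q G) (by omega) ((hmeet q hq).slope_equation (hG q hq) (hGnbr q hq)
      (by omega) fun q' hq' => hform q' (hsub q hq hq'))
  obtain ⟨T, hT, hTcard, hplane⟩ :=
    (hmeet q hq).exists_subset_plane (hG q hq) (hGnbr q hq) hden hlk
  exact ⟨q, hq, T, hT, by omega, l, k, hplane⟩

end LineOnSurface

section DimensionCount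

open MvPolynomial

variable {σ E : Type*} [Fintype σ] [Field E]

lemma finrank_restrictDegree (k : ℕ) :
    Module.finrank E (restrictDegree σ E k) = (k + 1) ^ Fintype.card σ := by
  classical
  have exponents_eq : {m : σ →₀ ℕ | ∀ i, m i ≤ k} =
      Finsupp.equivFunOnFinite ⁻¹' (Set.Iic (Function.const σ k)) := by
    ext m
    simp [Pi.le_def]
  rw [restrictDegree, Module.finrank_eq_nat_card_basis (basisRestrictSupport E _), exponents_eq,
    Nat.card_coe_set_eq, Set.ncard_preimage_of_injective_subset_range
      Finsupp.equivFunOnFinite.injective (by simp), ← Finset.coe_Iic, Set.ncard_coe_finset]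
  simp [Pi.card_Iic]

lemma totalDegree_le_of_mem_restrictDegree {k : ℕ} {G : MvPolynomial σ E}
    (hG : G ∈ restrictDegree σ E k) : G.totalDegree ≤ Fintype.card σ * k := by
  refine Finset.sup_le fun m hm => ?_
  rw [Finsupp.sum_fintype _ _ fun _ => rfl, ← smul_eq_mul, ← card_univ]
  exact sum_le_card_nsmul _ _ _ fun i _ => (mem_restrictDegree σ G k).mp hG m hm i

lemma exists_ne_zero_map_eq_zero {ι : Type*} (s : Finset ι)
    (φ : ι → MvPolynomial σ E →ₗ[E] Polynomial E)
    (hφ : ∀ i G, (φ i G).natDegree ≤ G.totalDegree) (k : ℕ)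
    (hk : (Fintype.card σ * k + 1) * #s < (k + 1) ^ Fintype.card σ) :
    ∃ F : MvPolynomial σ E, F ≠ 0 ∧ F.totalDegree ≤ Fintype.card σ * k ∧ ∀ i ∈ s, φ i F = 0 := by
  let coeffs : restrictDegree σ E k →ₗ[E] (s × Fin (Fintype.card σ * k + 1) → E) :=
    LinearMap.pi fun x => Polynomial.lcoeff E x.2 ∘ₗ φ x.1 ∘ₗ Submodule.subtype _
  have ker_ne_bot : LinearMap.ker coeffs ≠ ⊥ := by
    have := Module.finite_of_finrank_pos (R := E) (M := restrictDegree σ E k)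
      (by rw [finrank_restrictDegree]; positivity)
    apply LinearMap.ker_ne_bot_of_finrank_lt
    rw [finrank_restrictDegree, Module.finrank_fintype_fun_eq_card, Fintype.card_prod,
      Fintype.card_coe, Fintype.card_fin, mul_comm]
    exact hk
  obtain ⟨⟨F, hF⟩, hker, hne⟩ := (Submodule.ne_bot_iff _).mp ker_ne_bot
  have hdeg := totalDegree_le_of_mem_restrictDegree hF
  refine ⟨F, fun h => hne (Subtype.ext h), hdeg, fun i hi => Polynomial.ext fun j => ?_⟩
  by_cases hj : j < Fintype.card σ * k + 1
  · exact congrFun (LinearMap.mem_ker.mp hker) (⟨i, hi⟩, ⟨j, hj⟩)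
  · exact Polynomial.coeff_eq_zero_of_natDegree_lt ((hφ i F).trans_lt (by omega))

end DimensionCount

section BipartiteConfiguration

variable {E : Type*} [Field E]

/-- No two distinct points of `R` are conjugate, so that the dual lines of the points of `R` are
pairwise disjoint or parallel. -/
def ConjFree (R : Finset (E × E × E)) : Prop :=
  ∀ q ∈ R, ∀ q' ∈ R, Conj q q' → q = q'

open Classical in
/-- The points of `S` whose dual lines cross the dual line of `q`. -/
noncomputable def crossing (S : Finset (E × E × E)) (q : E × E × E) : Finset (E × E × E) :=
  {s ∈ S | Conj q s ∧ s.1 ≠ q.1}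

/-- The points of `T` lie on the polar plane of `q` and on a second plane, which is parallel to
the third axis and does not contain `q`. -/
def OnPolarLine (q : E × E × E) (T : Finset (E × E × E)) : Prop :=
  ∃ l k : E, ∀ q' ∈ T, Conj q q' ∧ l * (q'.2.1 - q.2.1) + k * (q'.1 - q.1) = 1

variable {R S : Finset (E × E × E)} {q : E × E × E}

lemma mem_crossing {s : E × E × E} : s ∈ crossing S q ↔ s ∈ S ∧ Conj q s ∧ s.1 ≠ q.1 := by
  classical
  exact mem_filter

lemma crossing_subset : crossing S q ⊆ S :=
  fun _ hs => (mem_crossing.mp hs).1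

lemma ConjFree.crossing_eq_empty (hR : ConjFree R) (hq : q ∈ R) : crossing R q = ∅ := by
  refine eq_empty_of_forall_notMem fun s hs => ?_
  obtain ⟨hsR, hconj, hne⟩ := mem_crossing.mp hs
  exact hne (congrArg Prod.fst (hR q hq s hsR hconj)).symm

lemma crossing_union [DecidableEq E] :
    crossing (R ∪ S) q = crossing R q ∪ crossing S q := by
  ext s
  simp only [mem_union, mem_crossing]
  tauto

lemma ConjFree.meetsDistinctly_crossing (hS : ConjFree S) (q : E × E × E) :
    MeetsDistinctly q (crossing S q) where
  conj _ hs := (mem_crossing.mp hs).2.1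
  fst_ne _ hs := (mem_crossing.mp hs).2.2
  injOn s hs s' hs' heq := by
    obtain ⟨hs, hconj, hne⟩ := mem_crossing.mp hs
    obtain ⟨hs', hconj', hne'⟩ := mem_crossing.mp hs'
    exact hS s hs s' hs' (conj_of_meetParam_eq hconj hconj' hne hne' heq)

open Classical in
lemma ConjFree.card_filter_conj_le (hS : ConjFree S) (q : E × E × E) :
    #{s ∈ S | Conj q s} ≤ #(crossing S q) + 1 := by
  have parallel_le_one : #{s ∈ S | Conj q s ∧ s.1 = q.1} ≤ 1 := by
    refine card_le_one.mpr fun s hs s' hs' => ?_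
    obtain ⟨hs, hconj, heq⟩ := mem_filter.mp hs
    obtain ⟨hs', hconj', heq'⟩ := mem_filter.mp hs'
    exact hS s hs s' hs' (conj_of_fst_eq hconj hconj' heq heq')
  have := card_filter_add_card_filter_not (s := {s ∈ S | Conj q s}) (fun s => s.1 ≠ q.1)
  simp only [filter_filter, not_not] at this
  rw [crossing]
  omega

open Classical in
lemma exists_onPolarLine (p : ℕ) [CharP E p] {t k : ℕ} (hR : ConjFree R) (hS : ConjFree S)
    (hne : R.Nonempty) (hRt : ∀ r ∈ R, t ≤ #{s ∈ S | Conj r s})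
    (hSt : ∀ s ∈ S, t ≤ #{r ∈ R | Conj s r}) (hk : (3 * k + 1) * #R < (k + 1) ^ 3)
    (ht : 15 * k + 1 < t) (hp : 6 * k + 1 < p) :
    (∃ q ∈ R, ∃ T ⊆ S, t ≤ #T + (3 * k + 1) ∧ OnPolarLine q T) ∨
      (∃ q ∈ S, ∃ T ⊆ R, t ≤ #T + (3 * k + 1) ∧ OnPolarLine q T) := by
  have crossing_R (q) (hq : q ∈ R) : crossing (R ∪ S) q = crossing S q := by
    rw [crossing_union, hR.crossing_eq_empty hq, empty_union]
  have crossing_S (q) (hq : q ∈ S) : crossing (R ∪ S) q = crossing R q := by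
    rw [crossing_union, hS.crossing_eq_empty hq, union_empty]
  have le_card (q) (hq : q ∈ R ∪ S) : t ≤ #(crossing (R ∪ S) q) + 1 := by
    rcases mem_union.mp hq with hq | hq
    · exact crossing_R q hq ▸ (hRt q hq).trans (hS.card_filter_conj_le q)
    · exact crossing_S q hq ▸ (hSt q hq).trans (hR.card_filter_conj_le q)
  have meets (q) (hq : q ∈ R ∪ S) : MeetsDistinctly q (crossing (R ∪ S) q) := by
    rcases mem_union.mp hq with hq | hq
    · exact crossing_R q hq ▸ hS.meetsDistinctly_crossing q
    · exact crossing_S q hq ▸ hR.meetsDistinctly_crossing q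
  obtain ⟨F, hF0, hdeg, hFR⟩ := exists_ne_zero_map_eq_zero (σ := Fin 3) R
    (fun q => (restrictDual q).toLinearMap) natDegree_restrictDual_le k
    (by simpa only [Fintype.card_fin] using hk)
  rw [Fintype.card_fin] at hdeg
  have vanishing (q) (hq : q ∈ R ∪ S) : restrictDual q F = 0 := by
    rcases mem_union.mp hq with hq' | hq'
    · exact hFR q hq'
    · refine (meets q hq).restrictDual_eq_zero (by have := le_card q hq; omega) fun r hr => ?_
      exact hFR r (crossing_subset (crossing_S q hq' ▸ hr))
  obtain ⟨q, hq, T, hT, hTcard, l, m, hplane⟩ := exists_subset_plane_of_vanishing p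
    (hne.mono subset_union_left) (fun q _ => crossing_subset) meets hF0 vanishing
    (fun q hq => by have := le_card q hq; omega) (by omega)
  have hcard : t ≤ #T + (3 * k + 1) := by have := le_card q hq; omega
  have hline : OnPolarLine q T := ⟨l, m, fun s hs => ⟨(meets q hq).conj s (hT hs), hplane s hs⟩⟩
  rcases mem_union.mp hq with hq | hq
  · exact .inl ⟨q, hq, T, (crossing_R q hq ▸ hT).trans crossing_subset, hcard, hline⟩
  · exact .inr ⟨q, hq, T, (crossing_S q hq ▸ hT).trans crossing_subset, hcard, hline⟩

end BipartiteConfiguration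

section MinimumDegree

variable {α β : Type*} (rel : α → β → Prop) [∀ a b, Decidable (rel a b)]

lemma sum_card_filter_comm (R : Finset α) (S : Finset β) :
    ∑ r ∈ R, #{s ∈ S | rel r s} = ∑ s ∈ S, #{r ∈ R | rel r s} :=
  sum_card_bipartiteAbove_eq_sum_card_bipartiteBelow rel

lemma exists_subsets_min_degree {t : ℕ} {R : Finset α} {S : Finset β}
    (h : t * (#R + #S) < ∑ r ∈ R, #{s ∈ S | rel r s}) :
    ∃ R' ⊆ R, ∃ S' ⊆ S, R'.Nonempty ∧ (∀ r ∈ R', t ≤ #{s ∈ S' | rel r s}) ∧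
      ∀ s ∈ S', t ≤ #{r ∈ R' | rel r s} := by
  classical
  induction hn : #R + #S using Nat.strong_induction_on generalizing R S with | _ n ih
  subst hn
  by_cases hR : ∃ r ∈ R, #{s ∈ S | rel r s} < t
  · obtain ⟨r, hr, hlt⟩ := hR
    have hcard := card_erase_add_one hr
    have hsum := add_sum_erase R (fun r => #{s ∈ S | rel r s}) hr
    obtain ⟨R', hR', S', hS', hmin⟩ := ih _ (by omega) (R := R.erase r) (S := S)
      (by rw [← hcard] at h; nlinarith) rfl
    exact ⟨R', hR'.trans (erase_subset _ _), S', hS', hmin⟩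
  by_cases hS : ∃ s ∈ S, #{r ∈ R | rel r s} < t
  · obtain ⟨s, hs, hlt⟩ := hS
    have hcard := card_erase_add_one hs
    have hsum := add_sum_erase S (fun s => #{r ∈ R | rel r s}) hs
    obtain ⟨R', hR', S', hS', hmin⟩ := ih _ (by omega) (R := R) (S := S.erase s)
      (by rw [sum_card_filter_comm] at h ⊢; rw [← hcard] at h; nlinarith) rfl
    exact ⟨R', hR', S', hS'.trans (erase_subset _ _), hmin⟩
  push Not at hR hS
  refine ⟨R, subset_rfl, S, subset_rfl, nonempty_iff_ne_empty.mpr ?_, hR, hS⟩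
  rintro rfl
  simp at h

end MinimumDegree

section GenericEmbedding

variable {F E : Type*} [Field F] [Field E] [Algebra F E]

lemma eq_zero_of_sum_mul_pow_eq_zero {θ : E} (hθ : Transcendental F θ) {n : ℕ} {c : Fin n → F}
    (h : ∑ i, algebraMap F E (c i) * θ ^ (i : ℕ) = 0) : c = 0 := by
  have hpoly : ∑ i, Polynomial.C (c i) * Polynomial.X ^ (i : ℕ) = 0 :=
    transcendental_iff.mp hθ _ (by simpa [map_sum] using h)
  funext j
  have hcoeff := congrArg (Polynomial.coeff · j) hpoly
  simpa [Polynomial.finsetSum_coeff, Polynomial.coeff_X_pow, Fin.val_inj] using hcoeff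

/-- The point `r` of affine 3-space lies on the plane `z + s₁ x + s₂ y + s₃ = 0`, which is
encoded by its coefficient vector `s`. -/
def OnPlane (r s : F × F × F) : Prop :=
  r.2.2 + s.1 * r.1 + s.2.1 * r.2.1 + s.2.2 = 0

/-- The linear embedding of points in `F³` into `E³` for which, with `θ` transcendental, distinct
points are never conjugate. -/
def embedPoint (θ : E) (r : F × F × F) : E × E × E :=
  (algebraMap F E r.1 + θ * algebraMap F E r.2.2,
    algebraMap F E r.2.1 + θ ^ 2 * algebraMap F E r.2.2,
    θ ^ 3 * algebraMap F E r.1 + θ ^ 4 * algebraMap F E r.2.1 + θ ^ 5 * algebraMap F E r.2.2)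

/-- The denominator of the coordinates of `embedPlane θ s`. -/
def planeDenom (θ : E) (s : F × F × F) : E :=
  1 - θ * algebraMap F E s.1 - θ ^ 2 * algebraMap F E s.2.1

/-- The scalar relating conjugacy of `embedPoint θ r` and `embedPlane θ s` to the equation of the
plane `s` at `r`. -/
noncomputable def planeScale (θ : E) (s : F × F × F) : E :=
  (θ ^ 5 - θ * θ ^ 3 - θ ^ 2 * θ ^ 4) / planeDenom θ s

/-- The point of `E³` whose polar plane contains `embedPoint θ r` exactly for the points `r` on the
plane `s`. -/
noncomputable def embedPlane (θ : E) (s : F × F × F) : E × E × E :=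
  (planeScale θ s * algebraMap F E s.2.1 - θ ^ 4, θ ^ 3 - planeScale θ s * algebraMap F E s.1,
    -planeScale θ s * algebraMap F E s.2.2)

variable {θ : E}

lemma planeDenom_ne_zero (hθ : Transcendental F θ) (s : F × F × F) : planeDenom θ s ≠ 0 := by
  intro h
  have hcoeff : ![1, -s.1, -s.2.1] = 0 := eq_zero_of_sum_mul_pow_eq_zero hθ (by
    simp only [Fin.sum_univ_three, Matrix.cons_val, map_neg, map_one]
    simpa [planeDenom, mul_comm, ← sub_eq_add_neg] using h)
  exact one_ne_zero (congrFun hcoeff 0)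

lemma planeScale_num_ne_zero (hθ : Transcendental F θ) :
    θ ^ 5 - θ * θ ^ 3 - θ ^ 2 * θ ^ 4 ≠ 0 := by
  intro h
  have hcoeff : ![0, 0, 0, 0, -1, 1, -1] = (0 : Fin 7 → F) :=
    eq_zero_of_sum_mul_pow_eq_zero hθ (by
      rw [Fin.sum_univ_seven]
      simpa using by linear_combination h)
  exact one_ne_zero (congrFun hcoeff 5)

lemma planeScale_mul_planeDenom (hθ : Transcendental F θ) (s : F × F × F) :
    planeScale θ s * planeDenom θ s = θ ^ 5 - θ * θ ^ 3 - θ ^ 2 * θ ^ 4 :=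
  div_mul_cancel₀ _ (planeDenom_ne_zero hθ s)

lemma planeScale_ne_zero (hθ : Transcendental F θ) (s : F × F × F) : planeScale θ s ≠ 0 :=
  div_ne_zero (planeScale_num_ne_zero hθ) (planeDenom_ne_zero hθ s)

lemma conj_embedPoint_embedPlane (hθ : Transcendental F θ) {r s : F × F × F} :
    Conj (embedPoint θ r) (embedPlane θ s) ↔ OnPlane r s := by
  have hscale := planeScale_mul_planeDenom hθ s
  have defect_eq : (embedPoint θ r).2.2 - (embedPlane θ s).2.2 -
      ((embedPoint θ r).1 * (embedPlane θ s).2.1 - (embedPlane θ s).1 * (embedPoint θ r).2.1) =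
        planeScale θ s * algebraMap F E (r.2.2 + s.1 * r.1 + s.2.1 * r.2.1 + s.2.2) := by
    rw [planeDenom] at hscale
    simp only [embedPoint, embedPlane, map_add, map_mul]
    linear_combination -algebraMap F E r.2.2 * hscale
  rw [Conj, OnPlane, ← sub_eq_zero, defect_eq, mul_eq_zero, map_eq_zero]
  exact or_iff_right (planeScale_ne_zero hθ s)

lemma eq_of_conj_embedPoint (hθ : Transcendental F θ) {r s : F × F × F}
    (h : Conj (embedPoint θ r) (embedPoint θ s)) : r = s := by
  obtain ⟨x, y, z⟩ := r
  obtain ⟨x', y', z'⟩ := s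
  simp only [Conj, embedPoint] at h
  have hcoeff : ![-(x * y' - x' * y), -(z * y' - z' * y), -(x * z' - x' * z),
      x - x', y - y', z - z'] = 0 := eq_zero_of_sum_mul_pow_eq_zero hθ (by
    simpa [Fin.sum_univ_six] using by linear_combination h)
  have hx : x - x' = 0 := congrFun hcoeff 3
  have hy : y - y' = 0 := congrFun hcoeff 4
  have hz : z - z' = 0 := congrFun hcoeff 5
  rw [sub_eq_zero.mp hx, sub_eq_zero.mp hy, sub_eq_zero.mp hz]

lemma sum_mul_pow_eq_zero_of_conj_embedPlane (hθ : Transcendental F θ) {a b d a' b' d' : F}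
    (h : Conj (embedPlane θ (a, b, d)) (embedPlane θ (a', b', d'))) :
    algebraMap F E (d' - d) + algebraMap F E (d * a' - d' * a) * θ +
      algebraMap F E (d * b' - d' * b) * θ ^ 2 + algebraMap F E (b' - b) * θ ^ 3 +
      algebraMap F E (a - a') * θ ^ 4 + algebraMap F E (b * a' - b' * a) * θ ^ 5 = 0 := by
  have hscale := planeScale_mul_planeDenom hθ (a, b, d)
  have hscale' := planeScale_mul_planeDenom hθ (a', b', d')
  refine (mul_eq_zero.mp ?_).resolve_left (planeScale_ne_zero hθ (a, b, d))
  refine (mul_eq_zero.mp ?_).resolve_left (planeScale_ne_zero hθ (a', b', d'))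
  simp only [Conj, embedPlane] at h
  simp only [planeDenom] at hscale hscale'
  simp only [map_sub, map_mul]
  linear_combination (θ ^ 5 - θ * θ ^ 3 - θ ^ 2 * θ ^ 4) * h +
    planeScale θ (a, b, d) * (θ ^ 4 * algebraMap F E a - θ ^ 3 * algebraMap F E b -
      algebraMap F E d) * hscale' +
    planeScale θ (a', b', d') * (algebraMap F E d' - θ ^ 4 * algebraMap F E a' +
      θ ^ 3 * algebraMap F E b') * hscale

lemma eq_of_conj_embedPlane (hθ : Transcendental F θ) {r s : F × F × F}
    (h : Conj (embedPlane θ r) (embedPlane θ s)) : r = s := by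
  obtain ⟨a, b, d⟩ := r
  obtain ⟨a', b', d'⟩ := s
  have hcoeff : ![d' - d, d * a' - d' * a, d * b' - d' * b, b' - b, a - a', b * a' - b' * a] = 0 :=
    eq_zero_of_sum_mul_pow_eq_zero hθ (by
      simpa [Fin.sum_univ_six] using sum_mul_pow_eq_zero_of_conj_embedPlane hθ h)
  have hd : d' - d = 0 := congrFun hcoeff 0
  have hb : b' - b = 0 := congrFun hcoeff 3
  have ha : a - a' = 0 := congrFun hcoeff 4
  rw [sub_eq_zero.mp ha, sub_eq_zero.mp hb, sub_eq_zero.mp hd]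

end GenericEmbedding

section Collinearity

variable {F E : Type*} [Field F] [Field E] [Algebra F E]

lemma collinear_of_subset_two_planes {T : Set (F × F × F)} {a b c u v w : F} (huv : u ≠ 0 ∨ v ≠ 0)
    (hgraph : ∀ t ∈ T, t.2.2 = a * t.1 + b * t.2.1 + c)
    (hline : ∀ t ∈ T, u * t.1 + v * t.2.1 = w) : Collinear F T := by
  rcases T.eq_empty_or_nonempty with rfl | ⟨t₀, ht₀⟩
  · exact collinear_empty F _
  rw [collinear_iff_of_mem ht₀]
  refine ⟨(v, -u, a * v - b * u), fun t ht => ?_⟩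
  have hz := hgraph t ht
  have hz₀ := hgraph t₀ ht₀
  have hw : u * (t.1 - t₀.1) + v * (t.2.1 - t₀.2.1) = 0 := by
    linear_combination hline t ht - hline t₀ ht₀
  rcases huv with hu | hv
  · have hx : t.1 = (t₀.2.1 - t.2.1) / u * v + t₀.1 := by field_simp; linear_combination hw
    have hy : t.2.1 = (t₀.2.1 - t.2.1) / u * -u + t₀.2.1 := by field_simp; ring
    exact ⟨(t₀.2.1 - t.2.1) / u, Prod.ext hx (Prod.ext hy (by
      simp only [vadd_eq_add, Prod.smul_mk, Prod.snd_add, smul_eq_mul]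
      linear_combination hz - hz₀ + a * hx + b * hy))⟩
  · have hx : t.1 = (t.1 - t₀.1) / v * v + t₀.1 := by field_simp; ring
    have hy : t.2.1 = (t.1 - t₀.1) / v * -u + t₀.2.1 := by field_simp; linear_combination hw
    exact ⟨(t.1 - t₀.1) / v, Prod.ext hx (Prod.ext hy (by
      simp only [vadd_eq_add, Prod.smul_mk, Prod.snd_add, smul_eq_mul]
      linear_combination hz - hz₀ + a * hx + b * hy))⟩

-- A linear functional `E → F` turns the equation with coefficients in `E` into one over `F`.
lemma collinear_of_subset_two_planes_extension {T : Set (F × F × F)} {a b c : F} {u v w : E}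
    (huv : u ≠ 0 ∨ v ≠ 0) (hgraph : ∀ t ∈ T, t.2.2 = a * t.1 + b * t.2.1 + c)
    (hline : ∀ t ∈ T, u * algebraMap F E t.1 + v * algebraMap F E t.2.1 = w) :
    Collinear F T := by
  have ⟨φ, hφ⟩ : ∃ φ : Module.Dual F E, φ u ≠ 0 ∨ φ v ≠ 0 := by
    by_contra! h
    simp only [forall_and, Module.forall_dual_apply_eq_zero_iff] at h
    exact huv.elim (· h.1) (· h.2)
  refine collinear_of_subset_two_planes (w := φ w) hφ hgraph fun t ht => ?_
  simp [← hline t ht, mul_comm _ (algebraMap F E _), ← Algebra.smul_def, mul_comm (φ _)]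

variable {θ : E} {T : Finset (F × F × F)}

open Classical in
lemma collinear_of_onPolarLine_image_embedPlane (hθ : Transcendental F θ) {r : F × F × F}
    (h : OnPolarLine (embedPoint θ r) (T.image (embedPlane θ))) :
    Collinear F (T : Set (F × F × F)) := by
  obtain ⟨l, k, h⟩ := h
  simp only [forall_mem_image, conj_embedPoint_embedPlane hθ] at h
  rcases T.eq_empty_or_nonempty with rfl | ⟨s₀, hs₀⟩
  · simpa using collinear_empty F (F × F × F)
  set ρ : E := θ ^ 5 - θ * θ ^ 3 - θ ^ 2 * θ ^ 4
  set m : E := l * (θ ^ 3 - (embedPoint θ r).2.1) - k * (θ ^ 4 + (embedPoint θ r).1) - 1 with hm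
  have hline : ∀ s ∈ T, (m * θ + l * ρ) * algebraMap F E s.1 +
      (m * θ ^ 2 - k * ρ) * algebraMap F E s.2.1 = m := by
    intro s hs
    have hplane := (h hs).2
    have hscale := planeScale_mul_planeDenom hθ s
    simp only [embedPlane, planeDenom] at hplane hscale
    linear_combination -(1 - θ * algebraMap F E s.1 - θ ^ 2 * algebraMap F E s.2.1) * hplane -
      (l * algebraMap F E s.1 - k * algebraMap F E s.2.1) * hscale
  refine collinear_of_subset_two_planes_extension (a := -r.1) (b := -r.2.1) (c := -r.2.2) ?_
    (fun s hs => by have := (h hs).1; rw [OnPlane] at this; linear_combination this) hline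
  by_contra! ⟨hu, hv⟩
  have hm0 : m = 0 := by rw [← hline s₀ hs₀, hu, hv]; ring
  have hρ : ρ ≠ 0 := planeScale_num_ne_zero hθ
  have hl : l = 0 := by simpa [hm0, hρ] using hu
  have hk : k = 0 := by simpa [hm0, hρ] using hv
  simp [hm, hl, hk] at hm0

open Classical in
lemma collinear_of_onPolarLine_image_embedPoint (hθ : Transcendental F θ) {s : F × F × F}
    (h : OnPolarLine (embedPlane θ s) (T.image (embedPoint θ))) :
    Collinear F (T : Set (F × F × F)) := by
  obtain ⟨l, k, h⟩ := h
  simp only [forall_mem_image] at h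
  have onPlane : ∀ r ∈ T, r.2.2 = -s.1 * r.1 + -s.2.1 * r.2.1 + -s.2.2 := fun r hr => by
    have := (conj_embedPoint_embedPlane hθ).mp (h hr).1.symm
    rw [OnPlane] at this
    linear_combination this
  rcases T.eq_empty_or_nonempty with rfl | ⟨r₀, hr₀⟩
  · simpa using collinear_empty F (F × F × F)
  refine collinear_of_subset_two_planes_extension
    (u := k * (1 - θ * algebraMap F E s.1) - l * θ ^ 2 * algebraMap F E s.1)
    (v := l * (1 - θ ^ 2 * algebraMap F E s.2.1) - k * θ * algebraMap F E s.2.1)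
    (w := 1 + l * (embedPlane θ s).2.1 + k * (embedPlane θ s).1 +
      (l * θ ^ 2 + k * θ) * algebraMap F E s.2.2) ?_ onPlane fun r hr => ?_
  · by_contra! ⟨hu, hv⟩
    have hk : k * planeDenom θ s = 0 := by
      rw [planeDenom]
      linear_combination (1 - θ ^ 2 * algebraMap F E s.2.1) * hu + θ ^ 2 * algebraMap F E s.1 * hv
    have hl : l * planeDenom θ s = 0 := by
      rw [planeDenom]
      linear_combination θ * algebraMap F E s.2.1 * hu + (1 - θ * algebraMap F E s.1) * hv
    have hD := planeDenom_ne_zero hθ s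
    simpa [(mul_eq_zero.mp hk).resolve_right hD, (mul_eq_zero.mp hl).resolve_right hD]
      using (h hr₀).2
  · have hz := congrArg (algebraMap F E) (onPlane r hr)
    simp only [map_add, map_mul, map_neg] at hz
    have hplane := (h hr).2
    simp only [embedPoint] at hplane
    linear_combination hplane - (l * θ ^ 2 + k * θ) * hz

end Collinearity

section PointPlane

lemma three_mul_sqrt_add_one_mul_lt {N : ℕ} (hN : 1 ≤ N) :
    (3 * Nat.sqrt (3 * N) + 1) * N < (Nat.sqrt (3 * N) + 1) ^ 3 := by
  have h := Nat.lt_succ_sqrt (3 * N)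
  nlinarith

lemma fifteen_mul_sqrt_lt_div {N I : ℕ} (hN : 1 ≤ N) (hI : 160000 * N ^ 3 ≤ I ^ 2) :
    15 * Nat.sqrt (3 * N) + 1 < (I - 1) / (2 * N) := by
  set k := Nat.sqrt (3 * N)
  have hk : k * k ≤ 3 * N := Nat.sqrt_le _
  have hk1 : 1 ≤ k := Nat.le_sqrt.mpr (by omega)
  rw [← Nat.succ_le_iff, Nat.le_div_iff_mul_le (by omega)]
  suffices h : 34 * N * k < I by
    refine le_trans ?_ (Nat.le_sub_one_of_lt h)
    nlinarith
  refine lt_of_pow_lt_pow_left₀ 2 (Nat.zero_le _) ?_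
  calc (34 * N * k) ^ 2 = 1156 * N ^ 2 * (k * k) := by ring
    _ ≤ 1156 * N ^ 2 * (3 * N) := Nat.mul_le_mul_left _ hk
    _ < 160000 * N ^ 3 := by linarith [show 0 < N ^ 3 by positivity]
    _ ≤ I ^ 2 := hI

lemma six_mul_sqrt_lt {N p : ℕ} (hN : 1 ≤ N) (hp : 200 * N ≤ p ^ 2) :
    6 * Nat.sqrt (3 * N) + 1 < p := by
  set k := Nat.sqrt (3 * N)
  have hk : k * k ≤ 3 * N := Nat.sqrt_le _
  have hk1 : 1 ≤ k := Nat.le_sqrt.mpr (by omega)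
  by_contra! h
  nlinarith

variable {F : Type*} [Field F]

open Classical in
lemma conjFree_image {α E : Type*} [Field E] {f : α → E × E × E}
    (hf : ∀ {a b}, Conj (f a) (f b) → a = b) (T : Finset α) : ConjFree (T.image f) := by
  simp only [ConjFree, forall_mem_image]
  exact fun a _ b _ h => congrArg f (hf h)

lemma injective_of_eq_of_conj {α E : Type*} [Field E] {f : α → E × E × E}
    (hf : ∀ {a b}, Conj (f a) (f b) → a = b) : Function.Injective f :=
  fun a b hab => hf (by simp [hab, Conj])

open Classical in
lemma exists_collinear_of_min_degree (p : ℕ) [CharP F p] {R S : Finset (F × F × F)} {t k : ℕ}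
    (hne : R.Nonempty) (hRt : ∀ r ∈ R, t ≤ #{s ∈ S | OnPlane r s})
    (hSt : ∀ s ∈ S, t ≤ #{r ∈ R | OnPlane r s}) (hk : (3 * k + 1) * #R < (k + 1) ^ 3)
    (ht : 15 * k + 1 < t) (hp : 6 * k + 1 < p) :
    ∃ T, (T ⊆ R ∨ T ⊆ S) ∧ Collinear F (T : Set (F × F × F)) ∧ t ≤ #T + (3 * k + 1) := by
  have hθ : Transcendental F (RatFunc.X : RatFunc F) := RatFunc.transcendental_X
  set θ : RatFunc F := RatFunc.X
  have : CharP (RatFunc F) p := charP_of_injective_algebraMap (algebraMap F _).injective p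
  have point_inj := injective_of_eq_of_conj (eq_of_conj_embedPoint hθ)
  have plane_inj := injective_of_eq_of_conj (eq_of_conj_embedPlane hθ)
  have hRt' : ∀ r ∈ R.image (embedPoint θ), t ≤ #{s ∈ S.image (embedPlane θ) | Conj r s} := by
    rw [forall_mem_image]
    intro r hr
    rw [filter_image, card_image_of_injective _ plane_inj]
    simpa only [conj_embedPoint_embedPlane hθ] using hRt r hr
  have hSt' : ∀ s ∈ S.image (embedPlane θ), t ≤ #{r ∈ R.image (embedPoint θ) | Conj s r} := by
    rw [forall_mem_image]
    intro s hs
    rw [filter_image, card_image_of_injective _ point_inj]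
    have conj_iff (r : F × F × F) : Conj (embedPlane θ s) (embedPoint θ r) ↔ OnPlane r s :=
      ⟨fun h => (conj_embedPoint_embedPlane hθ).mp h.symm,
        fun h => ((conj_embedPoint_embedPlane hθ).mpr h).symm⟩
    simpa only [conj_iff] using hSt s hs
  obtain ⟨q, hq, T', hT', hcard, hline⟩ | ⟨q, hq, T', hT', hcard, hline⟩ :=
    exists_onPolarLine p (conjFree_image (eq_of_conj_embedPoint hθ) R)
      (conjFree_image (eq_of_conj_embedPlane hθ) S) (hne.image _) hRt' hSt'
      (by rwa [card_image_of_injective _ point_inj]) ht hp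
  all_goals
    obtain ⟨r, -, rfl⟩ := mem_image.mp hq
    obtain ⟨T, hT, rfl⟩ := subset_image_iff.mp hT'
    have hcard' := hcard.trans (Nat.add_le_add_right card_image_le _)
  · exact ⟨T, .inr hT, collinear_of_onPolarLine_image_embedPlane hθ hline, hcard'⟩
  · exact ⟨T, .inl hT, collinear_of_onPolarLine_image_embedPoint hθ hline, hcard'⟩

open Classical in
theorem exists_collinear_of_incidences (p : ℕ) [CharP F p] {R S : Finset (F × F × F)} {N : ℕ}
    (hN : 1 ≤ N) (hR : #R ≤ N) (hS : #S ≤ N) (hp : 200 * N ≤ p ^ 2)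
    (hI : 160000 * N ^ 3 ≤ (∑ r ∈ R, #{s ∈ S | OnPlane r s}) ^ 2) :
    ∃ T, (T ⊆ R ∨ T ⊆ S) ∧ Collinear F (T : Set (F × F × F)) ∧
      ∑ r ∈ R, #{s ∈ S | OnPlane r s} ≤ 8 * N * #T := by
  set I := ∑ r ∈ R, #{s ∈ S | OnPlane r s}
  have hk := three_mul_sqrt_add_one_mul_lt hN
  have ht := fifteen_mul_sqrt_lt_div hN hI
  set k := Nat.sqrt (3 * N)
  set t := (I - 1) / (2 * N) with ht_def
  have ht_le : t * (2 * N) ≤ I - 1 := Nat.div_mul_le_self _ _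
  have hI_le : I ≤ 2 * N * (t + 1) := by
    have := Nat.lt_mul_div_succ (I - 1) (show 0 < 2 * N by omega)
    rw [← ht_def] at this
    omega
  have hdegree : t * (#R + #S) < I := by
    have : t * (#R + #S) ≤ t * (2 * N) := Nat.mul_le_mul_left _ (by omega)
    have : 0 < I := Nat.pos_of_ne_zero fun h => by simp [ht_def, h] at ht
    omega
  obtain ⟨R', hR', S', hS', hne, hRt, hSt⟩ := exists_subsets_min_degree OnPlane hdegree
  have hkR' : (3 * k + 1) * #R' < (k + 1) ^ 3 :=
    (Nat.mul_le_mul_left _ ((card_le_card hR').trans hR)).trans_lt hk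
  obtain ⟨T, hT, hcol, hcard⟩ :=
    exists_collinear_of_min_degree p hne hRt hSt hkR' ht (six_mul_sqrt_lt hN hp)
  refine ⟨T, hT.imp (·.trans hR') (·.trans hS'), hcol, ?_⟩
  calc I ≤ 2 * N * (t + 1) := hI_le
    _ ≤ 2 * N * (4 * #T) := Nat.mul_le_mul_left _ (by omega)
    _ = 8 * N * #T := by ring

end PointPlane

section Collisions

variable {α β : Type*} [DecidableEq β]

/-- The number of pairs of elements of `U` on which `f` agrees; energies and counts of coinciding
quotients of lines are of this kind. -/
def collisions (U : Finset α) (f : α → β) : ℕ :=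
  #{x ∈ U ×ˢ U | f x.1 = f x.2}

variable {U : Finset α} {f : α → β} {V : Finset β}

lemma collisions_eq_sum_sq (hV : ∀ u ∈ U, f u ∈ V) :
    collisions U f = ∑ v ∈ V, #{u ∈ U | f u = v} ^ 2 := by
  have maps_to (x) (hx : x ∈ ({x ∈ U ×ˢ U | f x.1 = f x.2} : Finset (α × α))) : f x.1 ∈ V :=
    hV _ (mem_product.mp (mem_filter.mp hx).1).1
  rw [collisions, card_eq_sum_card_fiberwise maps_to]
  refine sum_congr rfl fun v _ => ?_
  rw [sq, ← card_product]
  congr 1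
  ext x
  simp only [mem_filter, mem_product]
  constructor
  · rintro ⟨⟨⟨h₁, h₂⟩, heq⟩, hv⟩
    exact ⟨⟨h₁, hv⟩, h₂, heq ▸ hv⟩
  · rintro ⟨⟨h₁, hv₁⟩, h₂, hv₂⟩
    exact ⟨⟨⟨h₁, h₂⟩, hv₁.trans hv₂.symm⟩, hv₁⟩

lemma sq_sum_comp_le (hV : ∀ u ∈ U, f u ∈ V) (w : β → ℝ) :
    (∑ u ∈ U, w (f u)) ^ 2 ≤ collisions U f * ∑ v ∈ V, w v ^ 2 := by
  have sum_fibers : ∑ u ∈ U, w (f u) = ∑ v ∈ V, (#{u ∈ U | f u = v} : ℝ) * w v := by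
    rw [← sum_fiberwise_of_maps_to hV]
    refine sum_congr rfl fun v _ => ?_
    rw [← nsmul_eq_mul, ← sum_const]
    exact sum_congr rfl fun u hu => by rw [(mem_filter.mp hu).2]
  rw [sum_fibers, collisions_eq_sum_sq hV, Nat.cast_sum]
  simp_rw [Nat.cast_pow]
  exact sum_mul_sq_le_sq_mul_sq _ _ _

lemma sq_card_filter_mem_le (U : Finset α) (f : α → β) (V : Finset β) :
    (#{u ∈ U | f u ∈ V} : ℝ) ^ 2 ≤ collisions U f * #V := by
  have h := sq_sum_comp_le (U := U) (V := U.image f ∪ V)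
    (fun u hu => mem_union_left _ (mem_image_of_mem f hu)) (fun b => if b ∈ V then 1 else 0)
  simpa [ite_pow, sum_ite_mem, inter_eq_right.mpr subset_union_right] using h

end Collisions

section CollinearSets

variable {F V W : Type*} [Field F] [AddCommGroup V] [Module F V] [AddCommGroup W] [Module F W]

lemma collinear_image_linearMap {S : Set V} (hS : Collinear F S) (φ : V →ₗ[F] W) :
    Collinear F (φ '' S) := by
  obtain ⟨x₀, v, h⟩ := (collinear_iff_exists_forall_eq_smul_vadd _).mp hS
  refine (collinear_iff_exists_forall_eq_smul_vadd _).mpr ⟨φ x₀, φ v, ?_⟩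
  rintro _ ⟨x, hx, rfl⟩
  obtain ⟨r, rfl⟩ := h x hx
  exact ⟨r, by simp⟩

lemma const_or_injOn_of_collinear {S : Set V} (hS : Collinear F S) (φ : V →ₗ[F] W) :
    (∃ w, ∀ x ∈ S, φ x = w) ∨ Set.InjOn φ S := by
  obtain ⟨x₀, v, h⟩ := (collinear_iff_exists_forall_eq_smul_vadd _).mp hS
  by_cases hv : φ v = 0
  · refine .inl ⟨φ x₀, fun x hx => ?_⟩
    obtain ⟨r, rfl⟩ := h x hx
    simp [hv]
  · refine .inr fun x hx y hy hxy => ?_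
    obtain ⟨r, rfl⟩ := h x hx
    obtain ⟨s, rfl⟩ := h y hy
    have hrs : r • φ v = s • φ v := by simpa using hxy
    rw [smul_left_injective F hv hrs]

lemma const_or_injOn_comp_of_collinear {α : Type*} {T : Set α} {f : α → V} (hf : Set.InjOn f T)
    (hT : Collinear F (f '' T)) (φ : V →ₗ[F] W) {g : α → W} (hg : ∀ t ∈ T, φ (f t) = g t) :
    (∃ w, ∀ t ∈ T, g t = w) ∨ Set.InjOn g T ∧ Collinear F (g '' T) := by
  refine (const_or_injOn_of_collinear hT φ).imp ?_ fun hφ => ⟨?_, ?_⟩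
  · rintro ⟨w, hw⟩
    exact ⟨w, fun t ht => (hg t ht).symm.trans (hw _ ⟨t, ht, rfl⟩)⟩
  · exact (hφ.comp hf (Set.mapsTo_image f T)).congr hg
  · rw [← Set.image_congr hg, ← Set.image_image φ f]
    exact collinear_image_linearMap hT φ

end CollinearSets

section ImageIncidences

variable {F α β : Type*} [Field F]

open Classical in
lemma sq_incidences_le_or_incidences_le (p : ℕ) [CharP F p] {U : Finset α} {V : Finset β}
    {f : α → F × F × F} {g : β → F × F × F} (hf : Set.InjOn f U) (hg : Set.InjOn g V) {N : ℕ}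
    (hN : 1 ≤ N) (hU : #U ≤ N) (hV : #V ≤ N) (hp : 200 * N ≤ p ^ 2) {M : ℝ}
    (hUM : ∀ T ⊆ U, Collinear F (f '' T) → (#T : ℝ) ≤ M)
    (hVM : ∀ T ⊆ V, Collinear F (g '' T) → (#T : ℝ) ≤ M) :
    (#{x ∈ U ×ˢ V | OnPlane (f x.1) (g x.2)} : ℝ) ^ 2 ≤ 160000 * N ^ 3 ∨
      (#{x ∈ U ×ˢ V | OnPlane (f x.1) (g x.2)} : ℝ) ≤ 8 * N * M := by
  have sum_eq : ∑ r ∈ U.image f, #{s ∈ V.image g | OnPlane r s} =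
      #{x ∈ U ×ˢ V | OnPlane (f x.1) (g x.2)} := by
    rw [sum_image hf, card_filter, sum_product]
    exact sum_congr rfl fun u _ => by rw [card_filter, sum_image hg]
  refine or_iff_not_imp_left.mpr fun hI => ?_
  obtain ⟨T', hT', hcol, hcard⟩ := exists_collinear_of_incidences p hN
    (card_image_le.trans hU) (card_image_le.trans hV) hp
    (by rw [sum_eq]; exact_mod_cast (not_le.mp hI).le)
  have hT'M : (#T' : ℝ) ≤ M := by
    obtain h | h := hT' <;> obtain ⟨T, hT, rfl⟩ := subset_image_iff.mp h <;>
      rw [coe_image] at hcol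
    · exact (Nat.cast_le.mpr card_image_le).trans (hUM T hT hcol)
    · exact (Nat.cast_le.mpr card_image_le).trans (hVM T hT hcol)
  calc (#{x ∈ U ×ˢ V | OnPlane (f x.1) (g x.2)} : ℝ) ≤ 8 * N * #T' := by
        rw [← sum_eq]; exact_mod_cast hcard
    _ ≤ 8 * N * M := by gcongr

end ImageIncidences

section RichLines

variable {F : Type*} [Field F]

/-- The value at `x` of the line `l`, encoded as the pair (slope, intercept). In this encoding
collinear sets of lines are pencils: families of parallel or of concurrent lines. -/
def lineEval (l : F × F) (x : F) : F :=
  l.1 * x + l.2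

lemma exists_eq_of_lineEval_eq {G : Set (F × F)} (hG : Collinear F G) :
    ∃ x₀, ∀ l ∈ G, ∀ l' ∈ G, ∀ x ≠ x₀, lineEval l x = lineEval l' x → l = l' := by
  obtain ⟨l₀, v, h⟩ := (collinear_iff_exists_forall_eq_smul_vadd _).mp hG
  refine ⟨-v.2 / v.1, fun l hl l' hl' x hx heq => ?_⟩
  obtain ⟨r, rfl⟩ := h l hl
  obtain ⟨s, rfl⟩ := h l' hl'
  have hrs : (r - s) * (v.1 * x + v.2) = 0 := by
    simp only [lineEval, vadd_eq_add, Prod.fst_add, Prod.snd_add, Prod.smul_fst, Prod.smul_snd,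
      smul_eq_mul] at heq
    linear_combination heq
  obtain hrs | hv := mul_eq_zero.mp hrs
  · rw [sub_eq_zero.mp hrs]
  · have hv1 : v.1 = 0 := by
      by_contra hv1
      exact hx (by field_simp; linear_combination hv)
    have hv0 : v = 0 := Prod.ext hv1 (by simpa [hv1] using hv)
    simp [hv0]

variable [DecidableEq F]

/-- The number of points of the grid `A × A` on the line `l`. -/
def gridCount (A : Finset F) (l : F × F) : ℕ :=
  #{a ∈ A | lineEval l a ∈ A}

variable {A : Finset F} {G : Finset (F × F)} {κ : ℝ}

lemma gridCount_le (A : Finset F) (l : F × F) : gridCount A l ≤ #A :=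
  card_filter_le _ _

lemma sum_gridCount {ι : Type*} (I : Finset ι) (l : ι → F × F) (A : Finset F) :
    ∑ i ∈ I, gridCount A (l i) = #{y ∈ I ×ˢ A | lineEval (l y.1) y.2 ∈ A} := by
  rw [card_filter, sum_product]
  exact sum_congr rfl fun i _ => by rw [gridCount, card_filter]

lemma card_mul_card_le_of_rich (hG : ∀ l ∈ G, (#A : ℝ) ≤ κ * gridCount A l) :
    (#G * #A : ℝ) ≤ κ * #{y ∈ G ×ˢ A | lineEval y.1 y.2 ∈ A} := by
  have hsum := sum_le_sum hG
  rw [sum_const, nsmul_eq_mul, ← mul_sum, ← Nat.cast_sum] at hsum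
  rwa [sum_gridCount G (fun l => l) A] at hsum

lemma card_mul_card_le_of_rich_of_ne (hκ : 0 ≤ κ) (hA : 2 * κ ≤ #A)
    (hG : ∀ l ∈ G, (#A : ℝ) ≤ κ * gridCount A l) (x₀ : F) :
    (#G * #A : ℝ) ≤ 2 * κ * #{y ∈ G ×ˢ A | y.2 ≠ x₀ ∧ lineEval y.1 y.2 ∈ A} := by
  have card_le : #{y ∈ G ×ˢ A | lineEval y.1 y.2 ∈ A} ≤
      #{y ∈ G ×ˢ A | y.2 ≠ x₀ ∧ lineEval y.1 y.2 ∈ A} + #G := by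
    rw [← card_map ⟨(·, x₀), Prod.mk_left_injective x₀⟩ (s := G)]
    refine (card_le_card fun y hy => ?_).trans (card_union_le _ _)
    rw [mem_filter, mem_product] at hy
    obtain rfl | hx := eq_or_ne y.2 x₀
    · exact mem_union_right _ (mem_map.mpr ⟨y.1, hy.1.1, rfl⟩)
    · exact mem_union_left _ (mem_filter.mpr ⟨mem_product.mpr hy.1, hx, hy.2⟩)
  have card_le' : (#{y ∈ G ×ˢ A | lineEval y.1 y.2 ∈ A} : ℝ) ≤
      #{y ∈ G ×ˢ A | y.2 ≠ x₀ ∧ lineEval y.1 y.2 ∈ A} + #G := mod_cast card_le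
  linarith [card_mul_card_le_of_rich hG, mul_le_mul_of_nonneg_left card_le' hκ,
    mul_le_mul_of_nonneg_right hA (Nat.cast_nonneg (α := ℝ) #G)]

lemma card_le_of_rich_of_collinear (hκ : 0 < κ) (hA : 2 * κ ≤ #A)
    (hG : ∀ l ∈ G, (#A : ℝ) ≤ κ * gridCount A l) (hcol : Collinear F (G : Set (F × F))) :
    (#G : ℝ) ≤ 2 * κ * #A := by
  obtain ⟨x₀, hx₀⟩ := exists_eq_of_lineEval_eq hcol
  have card_le : #{y ∈ G ×ˢ A | y.2 ≠ x₀ ∧ lineEval y.1 y.2 ∈ A} ≤ #(A ×ˢ A) := by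
    refine card_le_card_of_injOn (fun y => (y.2, lineEval y.1 y.2)) (fun y hy => ?_) ?_
    · simp only [mem_coe, mem_filter, mem_product] at hy ⊢
      exact ⟨hy.1.2, hy.2.2⟩
    · rintro ⟨l, a⟩ hy ⟨l', a'⟩ hy' heq
      simp only [mem_coe, mem_filter, mem_product, Prod.mk.injEq] at hy hy' heq
      obtain ⟨rfl, heq⟩ := heq
      rw [hx₀ l hy.1.1 l' hy'.1.1 a hy.2.1 heq]
  have hA0 : (0 : ℝ) < #A := by linarith
  refine le_of_mul_le_mul_right ?_ hA0
  calc (#G * #A : ℝ) ≤ 2 * κ * #{y ∈ G ×ˢ A | y.2 ≠ x₀ ∧ lineEval y.1 y.2 ∈ A} :=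
        card_mul_card_le_of_rich_of_ne hκ.le hA hG x₀
    _ ≤ 2 * κ * (#A * #A) := by
        gcongr
        exact_mod_cast card_product A A ▸ card_le
    _ = 2 * κ * #A * #A := by ring

lemma sq_card_mul_card_le_collisions (hA : A.Nonempty)
    (hG : ∀ l ∈ G, (#A : ℝ) ≤ κ * gridCount A l) :
    (#G : ℝ) ^ 2 * #A ≤ κ ^ 2 * collisions (G ×ˢ A) fun y => lineEval y.1 y.2 := by
  have hA0 : (0 : ℝ) < #A := mod_cast hA.card_pos
  refine le_of_mul_le_mul_right ?_ hA0
  calc (#G : ℝ) ^ 2 * #A * #A = (#G * #A : ℝ) ^ 2 := by ring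
    _ ≤ (κ * #{y ∈ G ×ˢ A | lineEval y.1 y.2 ∈ A}) ^ 2 := by
        exact pow_le_pow_left₀ (by positivity) (card_mul_card_le_of_rich hG) 2
    _ ≤ κ ^ 2 * (collisions (G ×ˢ A) (fun y => lineEval y.1 y.2) * #A) := by
        rw [mul_pow]
        gcongr
        exact sq_card_filter_mem_le _ _ _
    _ = _ := by ring

end RichLines

section RichLinesBound

variable {F : Type*}

/-- The point of `F³` recording the left half `(l, a)` of an equation `l(a) = l'(a')` after the two
abscissae have been exchanged; together with `exchangePlane` it makes the equation bilinear. -/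
def exchangePoint (y : (F × F) × F) : F × F × F :=
  (y.1.1, y.2, y.1.2)

lemma exchangePoint_injective : Function.Injective (exchangePoint (F := F)) := by
  intro y z h
  simp only [exchangePoint, Prod.mk.injEq] at h
  ext <;> simp [h]

variable [Field F]

/-- The plane of `F³` dual to `exchangePoint`. -/
def exchangePlane (y : (F × F) × F) : F × F × F :=
  (y.2, -y.1.1, -y.1.2)

lemma exchangePlane_injective : Function.Injective (exchangePlane (F := F)) := by
  intro y z h
  simp only [exchangePlane, Prod.mk.injEq, neg_inj] at h
  ext <;> simp [h]

variable [DecidableEq F] {A : Finset F} {G : Finset (F × F)} {κ : ℝ}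

open Classical in
lemma collisions_lineEval_le (G : Finset (F × F)) (A : Finset F) :
    collisions (G ×ˢ A) (fun y => lineEval y.1 y.2) ≤
      #{x ∈ (G ×ˢ A) ×ˢ (G ×ˢ A) | OnPlane (exchangePoint x.1) (exchangePlane x.2)} := by
  refine card_le_card_of_injOn (fun x => ((x.1.1, x.2.2), (x.2.1, x.1.2))) (fun x hx => ?_) ?_
  · simp only [mem_coe, mem_filter, mem_product] at hx ⊢
    refine ⟨⟨⟨hx.1.1.1, hx.1.2.2⟩, hx.1.2.1, hx.1.1.2⟩, ?_⟩
    have heq := hx.2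
    rw [lineEval, lineEval] at heq
    rw [OnPlane, exchangePoint, exchangePlane]
    linear_combination heq
  · intro x _ y _ h
    simp only [Prod.mk.injEq] at h
    ext <;> simp [h]

lemma card_le_of_rich_of_collinear_image (hκ : 1 ≤ κ) (hA : 2 * κ ≤ #A)
    (hG : ∀ l ∈ G, (#A : ℝ) ≤ κ * gridCount A l) {T : Finset ((F × F) × F)} (hT : T ⊆ G ×ˢ A)
    {f : (F × F) × F → F × F × F} (hf : Function.Injective f) (φ : F × F × F →ₗ[F] F × F)
    (hφ : ∀ y, φ (f y) = y.1) (hcol : Collinear F (f '' T)) : (#T : ℝ) ≤ 2 * κ * #A := by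
  have mem (y) (hy : y ∈ T) : y.1 ∈ G ∧ y.2 ∈ A := mem_product.mp (hT hy)
  obtain ⟨l, hl⟩ | ⟨hinj, hcol'⟩ :=
    const_or_injOn_comp_of_collinear hf.injOn hcol φ fun y _ => hφ y
  · have hle : #T ≤ #A := by
      refine card_le_card_of_injOn Prod.snd (fun y hy => (mem y hy).2) fun y hy z hz heq => ?_
      exact Prod.ext ((hl y hy).trans (hl z hz).symm) heq
    calc (#T : ℝ) ≤ #A := mod_cast hle
      _ ≤ 2 * κ * #A := le_mul_of_one_le_left (by positivity) (by linarith)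
  · rw [← card_image_of_injOn hinj]
    rw [← coe_image] at hcol'
    refine card_le_of_rich_of_collinear (by linarith) hA ?_ hcol'
    exact forall_mem_image.mpr fun y hy => hG _ (mem y hy).1

lemma card_le_of_rich_of_card_mul_card_le (p : ℕ) [CharP F p] (hκ : 1 ≤ κ) (hA : 2 * κ ≤ #A)
    (hG : ∀ l ∈ G, (#A : ℝ) ≤ κ * gridCount A l) (hp : 200 * (#G * #A) ≤ p ^ 2) :
    (#G : ℝ) ≤ 160000 * κ ^ 4 * #A := by
  classical
  obtain rfl | hGne := G.eq_empty_or_nonempty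
  · rw [card_empty, Nat.cast_zero]
    positivity
  have hA0 : (0 : ℝ) < #A := by linarith
  have hAne : A.Nonempty := card_pos.mp (mod_cast hA0)
  have hcard := card_product G A
  set I := #{x ∈ (G ×ˢ A) ×ˢ (G ×ˢ A) | OnPlane (exchangePoint x.1) (exchangePlane x.2)}
  have hI : (#G : ℝ) ^ 2 * #A ≤ κ ^ 2 * I := by
    refine (sq_card_mul_card_le_collisions hAne hG).trans ?_
    gcongr
    exact collisions_lineEval_le G A
  obtain hsq | hle := sq_incidences_le_or_incidences_le p exchangePoint_injective.injOn
    exchangePlane_injective.injOn (N := #G * #A) (Nat.mul_pos hGne.card_pos hAne.card_pos)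
    hcard.le hcard.le hp
    (fun T hT => card_le_of_rich_of_collinear_image hκ hA hG hT exchangePoint_injective
      ((LinearMap.fst F F (F × F)).prod (.snd F F F ∘ₗ .snd F F (F × F))) fun _ => rfl)
    (fun T hT => card_le_of_rich_of_collinear_image hκ hA hG hT exchangePlane_injective
      (-LinearMap.snd F F (F × F)) fun y => by simp [exchangePlane])
  · refine le_of_mul_le_mul_left ?_ (show 0 < (#G : ℝ) ^ 3 * #A ^ 2 by positivity)
    calc (#G : ℝ) ^ 3 * #A ^ 2 * #G = (#G ^ 2 * #A) ^ 2 := by ring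
      _ ≤ (κ ^ 2 * I) ^ 2 := by gcongr
      _ = κ ^ 4 * I ^ 2 := by ring
      _ ≤ κ ^ 4 * (160000 * (#G * #A : ℕ) ^ 3) := by gcongr
      _ = _ := by push_cast; ring
  · refine le_of_mul_le_mul_left ?_ (show 0 < (#G : ℝ) * #A by positivity)
    calc (#G : ℝ) * #A * #G = #G ^ 2 * #A := by ring
      _ ≤ κ ^ 2 * I := hI
      _ ≤ κ ^ 2 * (8 * (#G * #A : ℕ) * (2 * κ * #A)) := by gcongr
      _ = #G * #A * (16 * κ ^ 3 * #A) := by push_cast; ring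
      _ ≤ #G * #A * (160000 * κ ^ 4 * #A) := by gcongr <;> norm_num

lemma card_le_of_rich (p : ℕ) [CharP F p] (hκ : 1 ≤ κ) (hA : 2 * κ ≤ #A)
    (hG : ∀ l ∈ G, (#A : ℝ) ≤ κ * gridCount A l)
    (hp : 400 * (160000 * κ ^ 4) * (#A : ℝ) ^ 2 ≤ (p : ℝ) ^ 2) :
    (#G : ℝ) ≤ 160000 * κ ^ 4 * #A := by
  by_contra! hlt
  set X : ℝ := 160000 * κ ^ 4 * #A with hX
  have hX1 : 1 ≤ X := by
    have : (1 : ℝ) ≤ κ ^ 4 := one_le_pow₀ hκ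
    nlinarith
  obtain ⟨G', hG', hcard⟩ :=
    exists_subset_card_eq (Nat.succ_le_of_lt ((Nat.floor_lt (by linarith)).mpr hlt))
  have hle : (#G' : ℝ) ≤ 2 * X := by
    rw [hcard, Nat.cast_succ]
    linarith [Nat.floor_le (show 0 ≤ X by linarith)]
  have hp' : 200 * (#G' * #A : ℝ) ≤ (p : ℝ) ^ 2 := by
    calc 200 * (#G' * #A : ℝ) ≤ 200 * (2 * X * #A) := by gcongr
      _ = 400 * (160000 * κ ^ 4) * (#A : ℝ) ^ 2 := by rw [hX]; ring
      _ ≤ (p : ℝ) ^ 2 := hp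
  have hG'X : (#G' : ℝ) ≤ X :=
    card_le_of_rich_of_card_mul_card_le p hκ hA (fun l hl => hG l (hG' hl)) (mod_cast hp')
  rw [hcard, Nat.cast_succ] at hG'X
  exact hG'X.not_gt (Nat.lt_floor_add_one X)

end RichLinesBound

section SecondMoment

variable {F : Type*} [Field F] [DecidableEq F] [Fintype F]

lemma card_filter_lineEval_mem (A : Finset F) (x : F) :
    #{l : F × F | lineEval l x ∈ A} = Fintype.card F * #A := by
  rw [← card_univ, ← card_product]
  refine card_nbij' (fun l => (l.1, lineEval l x)) (fun y => (y.1, y.2 - y.1 * x))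
    (fun l hl => ?_) (fun y hy => ?_) (fun l _ => ?_) (fun y _ => ?_)
  · simpa using hl
  · have heq : lineEval (y.1, y.2 - y.1 * x) x = y.2 := by simp [lineEval]
    simpa [heq] using hy
  · simp [lineEval]
  · simp [lineEval]

lemma card_filter_lineEval_mem_and_mem (A : Finset F) {x y : F} (hxy : x ≠ y) :
    #{l : F × F | lineEval l x ∈ A ∧ lineEval l y ∈ A} = #A ^ 2 := by
  have hxy' : x - y ≠ 0 := sub_ne_zero.mpr hxy
  rw [sq, ← card_product]
  refine card_nbij' (fun l => (lineEval l x, lineEval l y))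
    (fun z => ((z.1 - z.2) / (x - y), (x * z.2 - y * z.1) / (x - y)))
    (fun l hl => by simpa using hl) (fun z hz => ?_) (fun l _ => ?_) (fun z _ => ?_)
  · have hx : lineEval ((z.1 - z.2) / (x - y), (x * z.2 - y * z.1) / (x - y)) x = z.1 := by
      simp only [lineEval]; field_simp; ring
    have hy : lineEval ((z.1 - z.2) / (x - y), (x * z.2 - y * z.1) / (x - y)) y = z.2 := by
      simp only [lineEval]; field_simp; ring
    simpa [hx, hy] using hz
  · ext <;> simp only [lineEval] <;> field_simp <;> ring
  · ext <;> simp only [lineEval] <;> field_simp <;> ring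

lemma sum_gridCount_univ (A : Finset F) :
    ∑ l : F × F, gridCount A l = Fintype.card F * #A ^ 2 := by
  simp_rw [gridCount, sum_card_filter_comm (fun (l : F × F) a => lineEval l a ∈ A),
    card_filter_lineEval_mem, sum_const, smul_eq_mul]
  ring

lemma sum_sq_gridCount_le (A : Finset F) :
    ∑ l : F × F, gridCount A l ^ 2 ≤ Fintype.card F * #A ^ 2 + #A ^ 4 := by
  have sq_gridCount (l : F × F) :
      gridCount A l ^ 2 = #{x ∈ A ×ˢ A | lineEval l x.1 ∈ A ∧ lineEval l x.2 ∈ A} := by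
    rw [gridCount, sq, ← card_product, ← filter_product]
  have card_le (x) (_ : x ∈ A ×ˢ A) : #{l : F × F | lineEval l x.1 ∈ A ∧ lineEval l x.2 ∈ A} ≤
      (if x.1 = x.2 then Fintype.card F * #A else 0) + #A ^ 2 := by
    split_ifs with hx
    · simp [hx, card_filter_lineEval_mem]
    · simp [card_filter_lineEval_mem_and_mem A hx]
  simp_rw [sq_gridCount]
  rw [sum_card_filter_comm fun (l : F × F) (x : F × F) => lineEval l x.1 ∈ A ∧ lineEval l x.2 ∈ A]
  refine (sum_le_sum card_le).trans_eq ?_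
  simp only [sum_add_distrib, sum_product, sum_ite_eq, sum_ite_mem, inter_self, sum_const,
    card_product, smul_eq_mul]
  ring

lemma sum_sq_gridCount_sub_le (A : Finset F) :
    ∑ l : F × F, ((gridCount A l : ℝ) - (#A : ℝ) ^ 2 / Fintype.card F) ^ 2 ≤
      Fintype.card F * (#A : ℝ) ^ 2 := by
  have hq : (Fintype.card F : ℝ) ≠ 0 := Nat.cast_ne_zero.mpr Fintype.card_ne_zero
  have first : ∑ l : F × F, (gridCount A l : ℝ) = Fintype.card F * (#A : ℝ) ^ 2 :=
    mod_cast sum_gridCount_univ A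
  have second : ∑ l : F × F, (gridCount A l : ℝ) ^ 2 ≤ Fintype.card F * #A ^ 2 + (#A : ℝ) ^ 4 :=
    mod_cast sum_sq_gridCount_le A
  simp_rw [sub_sq, sum_add_distrib, sum_sub_distrib, ← sum_mul, ← mul_sum]
  rw [first, sum_const, card_univ, Fintype.card_prod, nsmul_eq_mul]
  push_cast
  field_simp
  linarith

lemma card_le_of_rich_of_finite {A : Finset F} {G : Finset (F × F)} {κ : ℝ} (hκ : 0 < κ)
    (hA : A.Nonempty) (hG : ∀ l ∈ G, (#A : ℝ) ≤ κ * gridCount A l)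
    (hq : 2 * κ * #A ≤ Fintype.card F) : (#G : ℝ) ≤ 4 * κ ^ 2 * Fintype.card F := by
  set q : ℝ := (Fintype.card F : ℝ)
  have hq0 : 0 < q := Nat.cast_pos.mpr Fintype.card_pos
  have sq_le (l) (hl : l ∈ G) :
      (#A / (2 * κ) : ℝ) ^ 2 ≤ ((gridCount A l : ℝ) - (#A : ℝ) ^ 2 / q) ^ 2 := by
    have hrich : (#A / κ : ℝ) ≤ gridCount A l := (div_le_iff₀' hκ).mpr (hG l hl)
    have hmean : (#A : ℝ) ^ 2 / q ≤ #A / (2 * κ) := by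
      rw [div_le_div_iff₀ hq0 (by positivity)]
      nlinarith
    have hhalf : (#A / κ : ℝ) = #A / (2 * κ) + #A / (2 * κ) := by field_simp; ring
    gcongr
    linarith
  have hsum : #G * (#A / (2 * κ) : ℝ) ^ 2 ≤ q * (#A : ℝ) ^ 2 := by
    rw [← nsmul_eq_mul, ← sum_const]
    exact (sum_le_sum sq_le).trans ((sum_le_univ_sum_of_nonneg fun _ => sq_nonneg _).trans
      (sum_sq_gridCount_sub_le A))
  refine le_of_mul_le_mul_right ?_ (show 0 < (#A / (2 * κ) : ℝ) ^ 2 by positivity)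
  refine hsum.trans_eq ?_
  field_simp
  ring

end SecondMoment

section Popularity

lemma card_le_two_mul_card_filter {ι : Type*} {s : Finset ι} {f : ι → ℝ} {a K : ℝ} (ha : 0 < a)
    (hK : 0 < K) (hf : ∀ i ∈ s, f i ≤ a) (h : a * #s / K ≤ ∑ i ∈ s, f i) :
    (#s : ℝ) ≤ 2 * K * #{i ∈ s | a ≤ 2 * K * f i} := by
  have le_popular_add (i) (hi : i ∈ s) :
      f i ≤ (if a ≤ 2 * K * f i then a else 0) + a / (2 * K) := by
    split_ifs with hpop
    · linarith [hf i hi, show 0 ≤ a / (2 * K) by positivity]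
    · rw [zero_add, le_div_iff₀' (by positivity)]
      exact (not_le.mp hpop).le
  have hsum := sum_le_sum le_popular_add
  rw [sum_add_distrib, ← sum_filter, sum_const, sum_const, nsmul_eq_mul, nsmul_eq_mul] at hsum
  have hhalf : a * #s / K = 2 * (#s * (a / (2 * K))) := by field_simp
  have hpop : #s * (a / (2 * K)) ≤ #{i ∈ s | a ≤ 2 * K * f i} * a := by linarith
  refine le_of_mul_le_mul_right ?_ (show 0 < a / (2 * K) by positivity)
  refine hpop.trans_eq ?_
  field_simp

end Popularity

section Quotients

variable {F : Type*} [Field F]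

/-- The line `l₁⁻¹ ∘ l₂`, for a pair `(l₁, l₂)` of lines regarded as affine maps; it is meaningful
when `l₁` has nonzero slope. -/
def lineQuot (x : (F × F) × (F × F)) : F × F :=
  (x.2.1 / x.1.1, (x.2.2 - x.1.2) / x.1.1)

lemma lineEval_lineQuot {l m : F × F} (hl : l.1 ≠ 0) {a b : F}
    (h : lineEval m a = lineEval l b) : lineEval (lineQuot (l, m)) a = b := by
  simp only [lineEval, lineQuot] at h ⊢
  field_simp
  linear_combination h

variable [DecidableEq F] {A : Finset F} {L : Finset (F × F)} {K : ℝ}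

lemma collisions_lineEval_le_sum_gridCount (h0 : ∀ l ∈ L, l.1 ≠ 0) (A : Finset F) :
    collisions (L ×ˢ A) (fun y => lineEval y.1 y.2) ≤
      ∑ x ∈ L ×ˢ L, gridCount A (lineQuot x) := by
  rw [sum_gridCount (L ×ˢ L) lineQuot A, collisions]
  have eval_quot (x) (hx : x ∈ ({x ∈ (L ×ˢ A) ×ˢ (L ×ˢ A) |
      lineEval x.1.1 x.1.2 = lineEval x.2.1 x.2.2} : Finset (((F × F) × F) × ((F × F) × F)))) :
      lineEval (lineQuot (x.2.1, x.1.1)) x.1.2 = x.2.2 := by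
    simp only [mem_filter, mem_product] at hx
    exact lineEval_lineQuot (h0 _ hx.1.2.1) hx.2
  refine card_le_card_of_injOn (fun x => ((x.2.1, x.1.1), x.1.2)) (fun x hx => ?_) ?_
  · have heq := eval_quot x hx
    simp only [mem_coe, mem_filter, mem_product] at hx ⊢
    exact ⟨⟨⟨hx.1.2.1, hx.1.1.1⟩, hx.1.1.2⟩, heq ▸ hx.1.2.2⟩
  · intro x hx y hy h
    have hx' := eval_quot x hx
    have hy' := eval_quot y hy
    simp only [Prod.mk.injEq] at h
    rw [h.1.1, h.1.2, h.2, hy'] at hx'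
    ext <;> simp [h, hx']

lemma sq_card_mul_card_le_sum_gridCount (h0 : ∀ l ∈ L, l.1 ≠ 0) (hA : A.Nonempty)
    (hL : ∀ l ∈ L, (#A : ℝ) ≤ K * gridCount A l) :
    (#L : ℝ) ^ 2 * #A ≤ K ^ 2 * ∑ x ∈ L ×ˢ L, (gridCount A (lineQuot x) : ℝ) := by
  refine (sq_card_mul_card_le_collisions hA hL).trans ?_
  gcongr
  exact_mod_cast collisions_lineEval_le_sum_gridCount h0 A

lemma sq_card_le_card_rich_lineQuot (h0 : ∀ l ∈ L, l.1 ≠ 0) (hA : A.Nonempty) (hK : 0 < K)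
    (hL : ∀ l ∈ L, (#A : ℝ) ≤ K * gridCount A l) :
    (#L : ℝ) ^ 2 ≤
      2 * K ^ 2 * #{x ∈ L ×ˢ L | (#A : ℝ) ≤ 2 * K ^ 2 * gridCount A (lineQuot x)} := by
  have hmean := sq_card_mul_card_le_sum_gridCount h0 hA hL
  have hcard : (#(L ×ˢ L) : ℝ) = (#L : ℝ) ^ 2 := by rw [card_product, Nat.cast_mul, sq]
  rw [← hcard] at hmean ⊢
  refine card_le_two_mul_card_filter (f := fun x => (gridCount A (lineQuot x) : ℝ))
    (show (0 : ℝ) < #A by positivity) (by positivity)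
    (fun x _ => Nat.cast_le.mpr (gridCount_le A _)) ?_
  rwa [div_le_iff₀' (by positivity), mul_comm (#A : ℝ)]

lemma card_cube_le_collisions_of_large_char (p : ℕ) [CharP F p] (hK : 1 ≤ K)
    (h0 : ∀ l ∈ L, l.1 ≠ 0) (hL : ∀ l ∈ L, (#A : ℝ) ≤ K * gridCount A l) (hLne : L.Nonempty)
    (hAL : (#A : ℝ) ≤ K * #L) (hA : 4 * K ^ 2 ≤ #A)
    (hp : 400 * (160000 * (2 * K ^ 2) ^ 4) * (#A : ℝ) ^ 2 ≤ (p : ℝ) ^ 2) :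
    (#L : ℝ) ^ 3 ≤ 10240000 * K ^ 13 * collisions (L ×ˢ L) lineQuot := by
  have hA0 : (0 : ℝ) < #A := lt_of_lt_of_le (by positivity) hA
  have hR := sq_card_le_card_rich_lineQuot h0 (card_pos.mp (mod_cast hA0)) (by linarith) hL
  set R : Finset ((F × F) × (F × F)) :=
    {x ∈ L ×ˢ L | (#A : ℝ) ≤ 2 * K ^ 2 * gridCount A (lineQuot x)}
  have himage : (#(R.image lineQuot) : ℝ) ≤ 160000 * (2 * K ^ 2) ^ 4 * #A :=
    card_le_of_rich p (by nlinarith) (by linarith)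
      (forall_mem_image.mpr fun x hx => (mem_filter.mp hx).2) hp
  have hsubset : R ⊆ {x ∈ L ×ˢ L | lineQuot x ∈ R.image lineQuot} := fun x hx =>
    mem_filter.mpr ⟨(mem_filter.mp hx).1, mem_image_of_mem _ hx⟩
  refine le_of_mul_le_mul_left ?_ (show (0 : ℝ) < #L by positivity)
  calc (#L : ℝ) * #L ^ 3 = (#L ^ 2) ^ 2 := by ring
    _ ≤ (2 * K ^ 2 * #{x ∈ L ×ˢ L | lineQuot x ∈ R.image lineQuot}) ^ 2 := by
        gcongr
        exact hR.trans (by gcongr)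
    _ = 4 * K ^ 4 * #{x ∈ L ×ˢ L | lineQuot x ∈ R.image lineQuot} ^ 2 := by ring
    _ ≤ 4 * K ^ 4 * (collisions (L ×ˢ L) lineQuot * #(R.image lineQuot)) := by
        gcongr
        exact sq_card_filter_mem_le _ _ _
    _ ≤ 4 * K ^ 4 * (collisions (L ×ˢ L) lineQuot *
          (160000 * (2 * K ^ 2) ^ 4 * (K * #L))) := by
        gcongr
        exact himage.trans (by gcongr)
    _ = _ := by ring

lemma card_cube_le_collisions_of_small_field [Fintype F] (hK : 1 ≤ K)
    (h0 : ∀ l ∈ L, l.1 ≠ 0) (hL : ∀ l ∈ L, (#A : ℝ) ≤ K * gridCount A l) (hLne : L.Nonempty)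
    (hAL : (#A : ℝ) ≤ K * #L) (hA : A.Nonempty) (hAq : 2 * K ^ 2 * #A ≤ Fintype.card F)
    (hqA : Fintype.card F ≤ 32000 * K ^ 4 * #A) :
    (#L : ℝ) ^ 3 ≤ 128000 * K ^ 9 * collisions (L ×ˢ L) lineQuot := by
  set q : ℝ := (Fintype.card F : ℝ)
  have hq0 : 0 < q := Nat.cast_pos.mpr Fintype.card_pos
  have hdev : (#L : ℝ) ^ 2 * #A ≤
      2 * K ^ 2 * ∑ x ∈ L ×ˢ L, ((gridCount A (lineQuot x) : ℝ) - (#A : ℝ) ^ 2 / q) := by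
    rw [sum_sub_distrib, sum_const, card_product, nsmul_eq_mul]
    have hmean : 2 * K ^ 2 * ((#L * #L : ℕ) * ((#A : ℝ) ^ 2 / q)) ≤ (#L : ℝ) ^ 2 * #A := by
      calc 2 * K ^ 2 * ((#L * #L : ℕ) * ((#A : ℝ) ^ 2 / q))
          = (#L : ℝ) ^ 2 * #A * (2 * K ^ 2 * #A / q) := by push_cast; ring
        _ ≤ (#L : ℝ) ^ 2 * #A * 1 := by gcongr; exact (div_le_one hq0).mpr hAq
        _ = _ := mul_one _
    linarith [sq_card_mul_card_le_sum_gridCount h0 hA hL]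
  refine le_of_mul_le_mul_left ?_ (show (0 : ℝ) < #L * #A ^ 2 by positivity)
  calc (#L * #A ^ 2 : ℝ) * #L ^ 3 = (#L ^ 2 * #A) ^ 2 := by ring
    _ ≤ (2 * K ^ 2 * ∑ x ∈ L ×ˢ L, ((gridCount A (lineQuot x) : ℝ) - (#A : ℝ) ^ 2 / q)) ^ 2 := by
        gcongr
    _ ≤ (2 * K ^ 2) ^ 2 * (collisions (L ×ˢ L) lineQuot * (q * (#A : ℝ) ^ 2)) := by
        rw [mul_pow]
        gcongr
        refine (sq_sum_comp_le (fun x _ => mem_univ _)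
          fun g => (gridCount A g : ℝ) - (#A : ℝ) ^ 2 / q).trans ?_
        gcongr
        exact sum_sq_gridCount_sub_le A
    _ ≤ (2 * K ^ 2) ^ 2 *
          (collisions (L ×ˢ L) lineQuot * (32000 * K ^ 4 * (K * #L) * (#A : ℝ) ^ 2)) := by
        gcongr
        exact hqA.trans (by gcongr)
    _ = _ := by ring

end Quotients

section PrimeField

variable {p : ℕ} [Fact p.Prime] {A : Finset (ZMod p)} {L : Finset (ZMod p × ZMod p)} {K : ℝ}

lemma card_cube_le_collisions_lineQuot (hK : 1 ≤ K) (h0 : ∀ l ∈ L, l.1 ≠ 0)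
    (hL : ∀ l ∈ L, (#A : ℝ) ≤ K * gridCount A l) (hLne : L.Nonempty)
    (hAL : (#A : ℝ) ≤ K * #L) (hA : 4 * K ^ 2 ≤ #A) (hp : 4 * K ^ 2 * #A ≤ p) :
    (#L : ℝ) ^ 3 ≤ 10240000 * K ^ 13 * collisions (L ×ˢ L) lineQuot := by
  have hA0 : (0 : ℝ) < #A := lt_of_lt_of_le (by positivity) hA
  by_cases hlarge : 400 * (160000 * (2 * K ^ 2) ^ 4) * (#A : ℝ) ^ 2 ≤ (p : ℝ) ^ 2
  · exact card_cube_le_collisions_of_large_char p hK h0 hL hLne hAL hA hlarge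
  have hpA : (p : ℝ) ≤ 32000 * K ^ 4 * #A := by
    refine (lt_of_pow_lt_pow_left₀ 2 (by positivity) ((not_le.mp hlarge).trans_eq ?_)).le
    ring
  have hcard : (Fintype.card (ZMod p) : ℝ) = p := by rw [ZMod.card]
  calc (#L : ℝ) ^ 3 ≤ 128000 * K ^ 9 * collisions (L ×ˢ L) lineQuot :=
        card_cube_le_collisions_of_small_field hK h0 hL hLne hAL (card_pos.mp (mod_cast hA0))
          (hcard ▸ le_trans (by gcongr; norm_num) hp) (hcard ▸ hpA)
    _ ≤ 10240000 * K ^ 13 * collisions (L ×ˢ L) lineQuot := by gcongr <;> norm_num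

end PrimeField

section SlopeFibers

variable {F : Type*} [Field F]

/-- The point of `F³` attached to a pair of lines; see `collisions_lineQuot_le`. -/
def quotPoint (u : (F × F) × (F × F)) : F × F × F :=
  (u.2.1, u.2.2, u.2.1 * u.1.2)

/-- The plane of `F³` attached to a pair of lines; see `collisions_lineQuot_le`. -/
def quotPlane (u : (F × F) × (F × F)) : F × F × F :=
  (-u.1.2, u.1.1, -(u.1.1 * u.2.2))

lemma collinear_of_fst_eq {S : Set (F × F)} {m : F} (h : ∀ l ∈ S, l.1 = m) : Collinear F S := by
  refine (collinear_iff_exists_forall_eq_smul_vadd _).mpr ⟨(m, 0), (0, 1), fun l hl => ⟨l.2, ?_⟩⟩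
  ext <;> simp [h l hl]

variable [DecidableEq F]

/-- The pairs of lines of `L` whose slopes have product `c`. -/
def slopeFiber (L : Finset (F × F)) (c : F) : Finset ((F × F) × (F × F)) :=
  {u ∈ L ×ˢ L | u.1.1 * u.2.1 = c}

variable {L : Finset (F × F)} {c : F} {M : ℕ} {κ : ℝ}

lemma mem_slopeFiber {u : (F × F) × (F × F)} :
    u ∈ slopeFiber L c ↔ (u.1 ∈ L ∧ u.2 ∈ L) ∧ u.1.1 * u.2.1 = c := by
  rw [slopeFiber, mem_filter, mem_product]

lemma swap_mem_slopeFiber {u : (F × F) × (F × F)} (hu : u ∈ slopeFiber L c) :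
    u.swap ∈ slopeFiber L c := by
  rw [mem_slopeFiber] at hu ⊢
  exact ⟨hu.1.symm, (mul_comm _ _).trans hu.2⟩

/- Clearing denominators in `l₁⁻¹ ∘ l₂ = l₃⁻¹ ∘ l₄` and regrouping the four lines as
`(l₁, l₄)`, `(l₂, l₃)` leaves one equation between slopes and one point–plane incidence. -/
open Classical in
lemma collisions_lineQuot_le (h0 : ∀ l ∈ L, l.1 ≠ 0) :
    collisions (L ×ˢ L) lineQuot ≤ ∑ c ∈ (L ×ˢ L).image fun u => u.1.1 * u.2.1,
      #{x ∈ slopeFiber L c ×ˢ slopeFiber L c | OnPlane (quotPoint x.1) (quotPlane x.2)} := by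
  simp_rw [← card_sigma]
  refine card_le_card_of_injOn
    (fun x => ⟨x.1.1.1 * x.2.2.1, (x.1.1, x.2.2), (x.1.2, x.2.1)⟩) (fun x hx => ?_) ?_
  · simp only [mem_coe, mem_filter, mem_product, mem_sigma, mem_slopeFiber] at hx ⊢
    obtain ⟨⟨⟨h₁, h₂⟩, h₃, h₄⟩, hquot⟩ := hx
    obtain ⟨hslope, hicpt⟩ := Prod.mk.inj hquot
    rw [div_eq_div_iff (h0 _ h₁) (h0 _ h₃)] at hslope hicpt
    refine ⟨mem_image_of_mem (fun u => u.1.1 * u.2.1) (mk_mem_product h₁ h₄),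
      ⟨⟨⟨h₁, h₄⟩, trivial⟩, ⟨h₂, h₃⟩, by linear_combination hslope⟩, ?_⟩
    simp only [OnPlane, quotPoint, quotPlane]
    refine mul_left_cancel₀ (mul_ne_zero (h0 _ h₁) (h0 _ h₃)) ?_
    linear_combination (-x.1.1.1 * x.2.2.1) * hicpt +
      (x.1.1.1 * (x.2.2.2 - x.2.1.2)) * hslope
  · intro x _ y _ h
    simp only [Sigma.mk.injEq, heq_eq_eq, Prod.mk.injEq] at h
    ext <;> simp [h]

open Classical in
lemma exists_slopeFiber_rich (h0 : ∀ l ∈ L, l.1 ≠ 0) (hLne : L.Nonempty) (hκ : 0 ≤ κ)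
    (hE : (#L : ℝ) ^ 3 ≤ κ * collisions (L ×ˢ L) lineQuot) :
    ∃ c, (slopeFiber L c).Nonempty ∧ (#(slopeFiber L c) * #L : ℝ) ≤
      κ * #{x ∈ slopeFiber L c ×ˢ slopeFiber L c | OnPlane (quotPoint x.1) (quotPlane x.2)} := by
  have sum_card : ∑ c ∈ (L ×ˢ L).image (fun u => u.1.1 * u.2.1), #(slopeFiber L c) = #L ^ 2 := by
    rw [sq, ← card_product]
    exact (card_eq_sum_card_fiberwise fun u hu => mem_image_of_mem _ hu).symm
  obtain ⟨c, hc, hle⟩ : ∃ c ∈ (L ×ˢ L).image (fun u => u.1.1 * u.2.1),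
      (#(slopeFiber L c) * #L : ℝ) ≤
        κ * #{x ∈ slopeFiber L c ×ˢ slopeFiber L c | OnPlane (quotPoint x.1) (quotPlane x.2)} := by
    refine exists_le_of_sum_le ((hLne.product hLne).image _) ?_
    rw [← sum_mul, ← mul_sum, ← Nat.cast_sum, ← Nat.cast_sum, sum_card]
    calc (↑(#L ^ 2) * #L : ℝ) = #L ^ 3 := by push_cast; ring
      _ ≤ κ * collisions (L ×ˢ L) lineQuot := hE
      _ ≤ _ := by gcongr; exact collisions_lineQuot_le h0
  obtain ⟨u, hu, rfl⟩ := mem_image.mp hc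
  exact ⟨_, ⟨u, mem_filter.mpr ⟨hu, rfl⟩⟩, hle⟩

lemma quotPoint_injOn_slopeFiber (h0 : ∀ l ∈ L, l.1 ≠ 0) (c : F) :
    Set.InjOn quotPoint (slopeFiber L c : Set ((F × F) × (F × F))) := by
  intro u hu v hv h
  obtain ⟨-, hc⟩ := mem_slopeFiber.mp hu
  obtain ⟨⟨-, hv2⟩, hc'⟩ := mem_slopeFiber.mp hv
  simp only [quotPoint, Prod.mk.injEq] at h
  obtain ⟨hslope, hicpt, hprod⟩ := h
  rw [hslope] at hprod hc
  have hicpt' := mul_left_cancel₀ (h0 _ hv2) hprod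
  have hslope' := mul_right_cancel₀ (h0 _ hv2) (hc.trans hc'.symm)
  ext <;> assumption

lemma quotPlane_injOn_slopeFiber (h0 : ∀ l ∈ L, l.1 ≠ 0) (c : F) :
    Set.InjOn quotPlane (slopeFiber L c : Set ((F × F) × (F × F))) := by
  intro u hu v hv h
  obtain ⟨-, hc⟩ := mem_slopeFiber.mp hu
  obtain ⟨⟨hv1, -⟩, hc'⟩ := mem_slopeFiber.mp hv
  simp only [quotPlane, Prod.mk.injEq, neg_inj] at h
  obtain ⟨hicpt, hslope, hprod⟩ := h
  rw [hslope] at hprod hc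
  have hicpt' := mul_left_cancel₀ (h0 _ hv1) hprod
  have hslope' := mul_left_cancel₀ (h0 _ hv1) (hc.trans hc'.symm)
  ext <;> assumption

lemma card_le_of_snd_const (h0 : ∀ l ∈ L, l.1 ≠ 0)
    (hM : ∀ G ⊆ L, Collinear F (G : Set (F × F)) → #G ≤ M) {T : Finset ((F × F) × (F × F))}
    (hT : T ⊆ slopeFiber L c) {l : F × F} (hl : ∀ u ∈ T, u.2 = l) : #T ≤ M := by
  have mem (u) (hu : u ∈ T) := mem_slopeFiber.mp (hT hu)
  have hinj : Set.InjOn Prod.fst (T : Set ((F × F) × (F × F))) := fun u hu v hv h =>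
    Prod.ext h ((hl u hu).trans (hl v hv).symm)
  rw [← card_image_of_injOn hinj]
  refine hM _ (image_subset_iff.mpr fun u hu => (mem u hu).1.1)
    (collinear_of_fst_eq (m := c / l.1) ?_)
  rw [coe_image, Set.forall_mem_image]
  intro u hu
  rw [← hl u hu, eq_div_iff (h0 _ (mem u hu).1.2), (mem u hu).2]

lemma card_le_of_collinear_of_snd (h0 : ∀ l ∈ L, l.1 ≠ 0)
    (hM : ∀ G ⊆ L, Collinear F (G : Set (F × F)) → #G ≤ M) {T : Finset ((F × F) × (F × F))}
    (hT : T ⊆ slopeFiber L c) {f : (F × F) × (F × F) → F × F × F}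
    (hf : Set.InjOn f (T : Set ((F × F) × (F × F)))) (φ : F × F × F →ₗ[F] F × F)
    (hφ : ∀ u, φ (f u) = u.2) (hcol : Collinear F (f '' T)) : #T ≤ M := by
  obtain ⟨l, hl⟩ | ⟨hinj, hcol'⟩ :=
    const_or_injOn_comp_of_collinear hf hcol φ fun u _ => hφ u
  · exact card_le_of_snd_const h0 hM hT hl
  · rw [← card_image_of_injOn hinj]
    exact hM _ (image_subset_iff.mpr fun u hu => (mem_slopeFiber.mp (hT hu)).1.2)
      (by rwa [coe_image])

lemma card_le_of_collinear_of_fst (h0 : ∀ l ∈ L, l.1 ≠ 0)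
    (hM : ∀ G ⊆ L, Collinear F (G : Set (F × F)) → #G ≤ M) {T : Finset ((F × F) × (F × F))}
    (hT : T ⊆ slopeFiber L c) {f : (F × F) × (F × F) → F × F × F}
    (hf : Set.InjOn f (T : Set ((F × F) × (F × F)))) (φ : F × F × F →ₗ[F] F × F)
    (hφ : ∀ u, φ (f u) = u.1) (hcol : Collinear F (f '' T)) : #T ≤ M := by
  rw [← card_image_of_injective T Prod.swap_injective]
  refine card_le_of_collinear_of_snd h0 hM (f := f ∘ Prod.swap) (c := c) ?_ ?_ φ (fun u => hφ _) ?_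
  · exact image_subset_iff.mpr fun u hu => swap_mem_slopeFiber (hT hu)
  · rw [coe_image]
    rintro _ ⟨u, hu, rfl⟩ _ ⟨v, hv, rfl⟩ h
    rw [hf hu hv h]
  · rwa [coe_image, ← Set.image_comp, Function.comp_assoc, Prod.swap_swap_eq, Function.comp_id]

lemma card_slopeFiber_le (h0 : ∀ l ∈ L, l.1 ≠ 0)
    (hM : ∀ G ⊆ L, Collinear F (G : Set (F × F)) → #G ≤ M) (c : F) :
    #(slopeFiber L c) ≤ M * #L :=
  card_le_mul_card_image_of_maps_to (fun _ hu => (mem_slopeFiber.mp hu).1.2) M fun _ _ =>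
    card_le_of_snd_const h0 hM (filter_subset _ _) fun _ hu => (mem_filter.mp hu).2

open Classical in
lemma slopeFiber_incidences_le (p : ℕ) [CharP F p] (h0 : ∀ l ∈ L, l.1 ≠ 0)
    (hM : ∀ G ⊆ L, Collinear F (G : Set (F × F)) → #G ≤ M) (hne : (slopeFiber L c).Nonempty)
    (hp : 200 * #(slopeFiber L c) ≤ p ^ 2) :
    (#{x ∈ slopeFiber L c ×ˢ slopeFiber L c | OnPlane (quotPoint x.1) (quotPlane x.2)} : ℝ) ^ 2 ≤
        160000 * #(slopeFiber L c) ^ 3 ∨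
      (#{x ∈ slopeFiber L c ×ˢ slopeFiber L c | OnPlane (quotPoint x.1) (quotPlane x.2)} : ℝ) ≤
        8 * #(slopeFiber L c) * M :=
  sq_incidences_le_or_incidences_le p (quotPoint_injOn_slopeFiber h0 c)
    (quotPlane_injOn_slopeFiber h0 c) hne.card_pos le_rfl le_rfl hp
    (fun T hT hcol => Nat.cast_le.mpr <| card_le_of_collinear_of_snd h0 hM hT
      ((quotPoint_injOn_slopeFiber h0 c).mono hT)
      ((LinearMap.fst F F (F × F)).prod (.fst F F F ∘ₗ .snd F F (F × F))) (fun _ => rfl) hcol)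
    (fun T hT hcol => Nat.cast_le.mpr <| card_le_of_collinear_of_fst h0 hM hT
      ((quotPlane_injOn_slopeFiber h0 c).mono hT)
      ((LinearMap.fst F F F ∘ₗ .snd F F (F × F)).prod (-LinearMap.fst F F (F × F)))
      (fun u => by simp [quotPlane]) hcol)

lemma card_le_of_collisions_lineQuot (p : ℕ) [CharP F p] (hκ : 1 ≤ κ) (h0 : ∀ l ∈ L, l.1 ≠ 0)
    (hLne : L.Nonempty) (hE : (#L : ℝ) ^ 3 ≤ κ * collisions (L ×ˢ L) lineQuot)
    (hp : (#L : ℝ) ≤ κ * p) (hM : ∀ G ⊆ L, Collinear F (G : Set (F × F)) → #G ≤ M) :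
    (#L : ℝ) ≤ 160000 * κ ^ 3 * M := by
  classical
  have hκ0 : 0 < κ := by linarith
  obtain hpM | hpM := le_total (p : ℝ) (200 * κ * M)
  · calc (#L : ℝ) ≤ κ * (200 * κ * M) := hp.trans (by gcongr)
      _ = 200 * κ ^ 2 * M := by ring
      _ ≤ 160000 * κ ^ 3 * M := by gcongr <;> norm_num
  obtain ⟨c, hne, hrich⟩ := exists_slopeFiber_rich h0 hLne hκ0.le hE
  set N := #(slopeFiber L c)
  set I := #{x ∈ slopeFiber L c ×ˢ slopeFiber L c | OnPlane (quotPoint x.1) (quotPlane x.2)}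
  have hN0 : 0 < N := hne.card_pos
  have hNM : (N : ℝ) ≤ M * #L := mod_cast card_slopeFiber_le h0 hM c
  have hNp : 200 * (N : ℝ) ≤ (p : ℝ) ^ 2 := by
    calc 200 * (N : ℝ) ≤ 200 * (M * (κ * p)) := by gcongr; exact hNM.trans (by gcongr)
      _ = 200 * κ * M * p := by ring
      _ ≤ p * p := by gcongr
      _ = (p : ℝ) ^ 2 := (sq _).symm
  obtain hsq | hle := slopeFiber_incidences_le p h0 hM hne (mod_cast hNp)
  · refine le_of_mul_le_mul_left ?_ (show (0 : ℝ) < N ^ 2 * #L by positivity)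
    calc (N ^ 2 * #L : ℝ) * #L = (N * #L) ^ 2 := by ring
      _ ≤ (κ * I) ^ 2 := by gcongr
      _ = κ ^ 2 * I ^ 2 := by ring
      _ ≤ κ ^ 3 * (160000 * N ^ 3) := by gcongr; norm_num
      _ = 160000 * κ ^ 3 * N ^ 2 * N := by ring
      _ ≤ 160000 * κ ^ 3 * N ^ 2 * (M * #L) := by gcongr
      _ = _ := by ring
  · refine le_of_mul_le_mul_left ?_ (show (0 : ℝ) < N by positivity)
    calc (N * #L : ℝ) ≤ κ * (8 * N * M) := hrich.trans (by gcongr)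
      _ = N * (8 * κ * M) := by ring
      _ ≤ N * (160000 * κ ^ 3 * M) := by
          gcongr
          · norm_num
          · exact le_self_pow₀ hκ (by norm_num)

end SlopeFibers

section Energy

variable {α β : Type*} [DecidableEq β] {q : α × α → β} {X Y : Finset α} {a k n Q Z Z' : ℝ}

/-- The energy of `X` and `Y` with respect to a binary operation `q`: the number of coincidences
between the values of `q` on `X × X` and on `Y × Y`. Subtraction gives the additive energy and, away
from zero, division gives the multiplicative energy. -/
def energy (q : α × α → β) (X Y : Finset α) : ℕ :=
  #{z ∈ (X ×ˢ X) ×ˢ (Y ×ˢ Y) | q z.1 = q z.2}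

lemma sq_energy_le (q : α × α → β) (X Y : Finset α) :
    (energy q X Y : ℝ) ^ 2 ≤ energy q X X * energy q Y Y := by
  set V := (X ×ˢ X).image q ∪ (Y ×ˢ Y).image q
  have sum_left : ∑ u ∈ X ×ˢ X, (#{y ∈ Y ×ˢ Y | q y = q u} : ℝ) = energy q X Y := by
    rw [← Nat.cast_sum, energy, card_filter, sum_product (s := X ×ˢ X)]
    simp_rw [card_filter, eq_comm]
  have sum_right : ∑ v ∈ V, (#{y ∈ Y ×ˢ Y | q y = v} : ℝ) ^ 2 = energy q Y Y := by
    have h := collisions_eq_sum_sq (V := V) fun y (hy : y ∈ Y ×ˢ Y) =>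
      mem_union_right _ (mem_image_of_mem q hy)
    exact_mod_cast h.symm
  rw [← sum_left, ← sum_right]
  exact sq_sum_comp_le (fun x hx => mem_union_left _ (mem_image_of_mem q hx))
    fun v => (#{y ∈ Y ×ˢ Y | q y = v} : ℝ)

lemma energy_self_le (hq : ∀ y ∈ X, Set.InjOn (fun x => q (x, y)) X) :
    energy q X X ≤ #X ^ 3 := by
  have h : energy q X X ≤ #((X ×ˢ X) ×ˢ X) := by
    refine card_le_card_of_injOn (fun z => (z.1, z.2.2)) (fun z hz => ?_) ?_
    · simp only [mem_coe, mem_filter, mem_product] at hz ⊢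
      exact ⟨hz.1.1, hz.1.2.2⟩
    · rintro ⟨u, x, y⟩ hz ⟨u', x', y'⟩ hw heq
      simp only [mem_coe, mem_filter, mem_product, Prod.mk.injEq] at hz hw heq
      obtain ⟨rfl, rfl⟩ := heq
      rw [hq y hz.1.2.2 hz.1.2.1 hw.1.2.1 (hz.2.symm.trans hw.2)]
  rwa [card_product, card_product, ← sq, ← pow_succ] at h

lemma sq_mul_card_le_energy_self (hY : Y.Nonempty)
    (hqY : ∀ y ∈ Y, Set.InjOn (fun x => q (x, y)) Y) (ha : 0 ≤ a)
    (h : (#Y : ℝ) ^ 2 * a ≤ k * energy q X Y) : a ^ 2 * #Y ≤ k ^ 2 * energy q X X := by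
  have hY0 : (0 : ℝ) < #Y := mod_cast hY.card_pos
  refine le_of_mul_le_mul_right ?_ (pow_pos hY0 3)
  calc a ^ 2 * #Y * (#Y : ℝ) ^ 3 = (#Y ^ 2 * a) ^ 2 := by ring
    _ ≤ (k * energy q X Y) ^ 2 := by gcongr
    _ = k ^ 2 * energy q X Y ^ 2 := mul_pow _ _ _
    _ ≤ k ^ 2 * (energy q X X * energy q Y Y) := by gcongr; exact sq_energy_le q X Y
    _ ≤ k ^ 2 * (energy q X X * #Y ^ 3) := by gcongr; exact_mod_cast energy_self_le hqY
    _ = _ := by ring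

lemma card_pow_four_le_energy_self (hqX : ∀ y ∈ X, Set.InjOn (fun x => q (x, y)) X) (ha : 0 < a)
    (hX : #X ≤ a) (h : (#Y : ℝ) ^ 2 * a ≤ k * energy q X Y) :
    (#Y : ℝ) ^ 4 ≤ k ^ 2 * a * energy q Y Y := by
  refine le_of_mul_le_mul_right ?_ (pow_pos ha 2)
  calc (#Y : ℝ) ^ 4 * a ^ 2 = (#Y ^ 2 * a) ^ 2 := by ring
    _ ≤ (k * energy q X Y) ^ 2 := by gcongr
    _ = k ^ 2 * energy q X Y ^ 2 := mul_pow _ _ _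
    _ ≤ k ^ 2 * (energy q X X * energy q Y Y) := by gcongr; exact sq_energy_le q X Y
    _ ≤ k ^ 2 * ((#X : ℝ) ^ 3 * energy q Y Y) := by gcongr; exact_mod_cast energy_self_le hqX
    _ ≤ k ^ 2 * (a ^ 3 * energy q Y Y) := by gcongr
    _ = _ := by ring

/-- The three lower bounds of the theorem, for an energy functional `E`, a set `X` of about `a`
elements and a set `Y` of about `n`, with loss `Z`. -/
def LargeEnergies (E : Finset α → Finset α → ℕ) (X Y : Finset α) (a n Z : ℝ) : Prop :=
  a ^ 3 ≤ Z * E X X ∧ a * n ^ 2 ≤ Z * E Y Y ∧ a * n ^ 2 ≤ Z * E X Y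

lemma LargeEnergies.mono {E E' : Finset α → Finset α → ℕ} {X' Y' : Finset α}
    (h : LargeEnergies E X Y a n Z) (hZ : 0 ≤ Z) (hXX : E X X ≤ E' X' X') (hYY : E Y Y ≤ E' Y' Y')
    (hXY : E X Y ≤ E' X' Y') : LargeEnergies E' X' Y' a n Z := by
  refine ⟨h.1.trans ?_, h.2.1.trans ?_, h.2.2.trans ?_⟩ <;> gcongr

lemma largeEnergies_energy (hqX : ∀ y ∈ X, Set.InjOn (fun x => q (x, y)) X)
    (hqY : ∀ y ∈ Y, Set.InjOn (fun x => q (x, y)) Y) (ha : 0 < a) (hX : #X ≤ a) (han : a ≤ n)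
    (hQ : 1 ≤ Q) (hn : n ≤ Q * #Y) (hk : 1 ≤ k) (h : (#Y : ℝ) ^ 2 * a ≤ k * energy q X Y) :
    LargeEnergies (energy q) X Y a n (k ^ 2 * Q ^ 4) := by
  have hn0 : 0 ≤ n := ha.le.trans han
  have hY : Y.Nonempty := by
    by_contra hY
    simp only [not_nonempty_iff_eq_empty.mp hY, card_empty, Nat.cast_zero, mul_zero] at hn
    linarith
  refine ⟨?_, le_of_mul_le_mul_right ?_ ha, ?_⟩
  · calc a ^ 3 = a ^ 2 * a := by ring
      _ ≤ a ^ 2 * (Q * #Y) := by gcongr; exact han.trans hn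
      _ = Q * (a ^ 2 * #Y) := by ring
      _ ≤ Q * (k ^ 2 * energy q X X) :=
          mul_le_mul_of_nonneg_left (sq_mul_card_le_energy_self hY hqY ha.le h) (by linarith)
      _ ≤ Q ^ 4 * (k ^ 2 * energy q X X) := by
          gcongr
          exact le_self_pow₀ hQ (by norm_num)
      _ = _ := by ring
  · calc a * n ^ 2 * a = a ^ 2 * n ^ 2 := by ring
      _ ≤ n ^ 2 * n ^ 2 := by gcongr
      _ = n ^ 4 := by ring
      _ ≤ (Q * #Y) ^ 4 := by gcongr
      _ = Q ^ 4 * (#Y : ℝ) ^ 4 := mul_pow _ _ _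
      _ ≤ Q ^ 4 * (k ^ 2 * a * energy q Y Y) := by
          gcongr
          exact card_pow_four_le_energy_self hqX ha hX h
      _ = _ := by ring
  · calc a * n ^ 2 ≤ a * (Q * #Y) ^ 2 := by gcongr
      _ = Q ^ 2 * (#Y ^ 2 * a) := by ring
      _ ≤ Q ^ 2 * (k * energy q X Y) := by gcongr
      _ ≤ Q ^ 4 * (k ^ 2 * energy q X Y) := by
          gcongr
          · norm_num
          · exact le_self_pow₀ hk (by norm_num)
      _ = _ := by ring

end Energy

section Pencils

variable {F : Type*} [Field F]

lemma parallel_or_concurrent_of_collinear {G : Set (F × F)} (hG : Collinear F G) :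
    (∃ m, ∀ l ∈ G, l.1 = m) ∨ ∃ x₀ y₀, ∀ l ∈ G, lineEval l x₀ = y₀ := by
  obtain ⟨l₀, v, h⟩ := (collinear_iff_exists_forall_eq_smul_vadd _).mp hG
  by_cases hv : v.1 = 0
  · refine .inl ⟨l₀.1, fun l hl => ?_⟩
    obtain ⟨r, rfl⟩ := h l hl
    simp [hv]
  · refine .inr ⟨-v.2 / v.1, lineEval l₀ (-v.2 / v.1), fun l hl => ?_⟩
    obtain ⟨r, rfl⟩ := h l hl
    simp only [lineEval, vadd_eq_add, Prod.fst_add, Prod.snd_add, Prod.smul_fst, Prod.smul_snd,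
      smul_eq_mul]
    field_simp
    ring

variable [DecidableEq F] {A : Finset F} {G : Finset (F × F)} {κ Q n : ℝ}

lemma sq_card_mul_card_le_collisions_of_injOn {α : Type*} {U : Finset α} {A' : Finset F} {f : α → F}
    (hκ : 0 < κ) (hA : 2 * κ ≤ #A) (hG : ∀ l ∈ G, (#A : ℝ) ≤ κ * gridCount A l) (x₀ : F)
    (T : (F × F) × F → α) (hT : Set.InjOn T {y | y.1 ∈ G})
    (hTU : ∀ l ∈ G, ∀ x ∈ A, x ≠ x₀ → lineEval l x ∈ A → T (l, x) ∈ U ∧ f (T (l, x)) ∈ A')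
    (hA' : #A' ≤ #A) : (#G : ℝ) ^ 2 * #A ≤ 4 * κ ^ 2 * collisions U f := by
  have card_le : #{y ∈ G ×ˢ A | y.2 ≠ x₀ ∧ lineEval y.1 y.2 ∈ A} ≤ #{u ∈ U | f u ∈ A'} := by
    refine card_le_card_of_injOn T (fun y hy => ?_) (hT.mono fun y hy => ?_)
    · simp only [mem_coe, mem_filter, mem_product] at hy ⊢
      exact hTU _ hy.1.1 _ hy.1.2 hy.2.1 hy.2.2
    · exact (mem_product.mp (mem_filter.mp hy).1).1
  have hA0 : (0 : ℝ) < #A := by linarith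
  refine le_of_mul_le_mul_right ?_ hA0
  calc (#G : ℝ) ^ 2 * #A * #A = (#G * #A : ℝ) ^ 2 := by ring
    _ ≤ (2 * κ * #{y ∈ G ×ˢ A | y.2 ≠ x₀ ∧ lineEval y.1 y.2 ∈ A}) ^ 2 :=
        pow_le_pow_left₀ (by positivity) (card_mul_card_le_of_rich_of_ne hκ.le hA hG x₀) 2
    _ ≤ (2 * κ * #{u ∈ U | f u ∈ A'}) ^ 2 := by gcongr
    _ = (2 * κ) ^ 2 * (#{u ∈ U | f u ∈ A'} : ℝ) ^ 2 := mul_pow _ _ _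
    _ ≤ (2 * κ) ^ 2 * (collisions U f * #A') := by
        gcongr
        exact sq_card_filter_mem_le _ _ _
    _ ≤ (2 * κ) ^ 2 * (collisions U f * #A) := by gcongr
    _ = _ := by ring

lemma collisions_sub_le_energy (X Y : Finset F) :
    collisions (X ×ˢ Y) (fun z => z.1 - z.2) ≤ energy (fun z => z.1 - z.2) X Y := by
  refine card_le_card_of_injOn (fun z => ((z.1.1, z.2.1), z.1.2, z.2.2)) (fun z hz => ?_) ?_
  · simp only [mem_coe, mem_filter, mem_product] at hz ⊢
    exact ⟨⟨⟨hz.1.1.1, hz.1.2.1⟩, hz.1.1.2, hz.1.2.2⟩, by linear_combination hz.2⟩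
  · intro z _ w _ h
    simp only [Prod.mk.injEq] at h
    ext <;> simp [h]

lemma collisions_mul_le_energy {X Y : Finset F} (hX : 0 ∉ X) (hY : 0 ∉ Y) :
    collisions (X ×ˢ Y) (fun z => z.1 * z.2) ≤ energy (fun z => z.1 / z.2) X Y := by
  refine card_le_card_of_injOn (fun z => ((z.1.1, z.2.1), z.2.2, z.1.2)) (fun z hz => ?_) ?_
  · simp only [mem_coe, mem_filter, mem_product] at hz ⊢
    refine ⟨⟨⟨hz.1.1.1, hz.1.2.1⟩, hz.1.2.2, hz.1.1.2⟩, ?_⟩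
    rw [div_eq_div_iff (ne_of_mem_of_not_mem hz.1.2.1 hX) (ne_of_mem_of_not_mem hz.1.1.2 hY)]
    linear_combination hz.2
  · intro z _ w _ h
    simp only [Prod.mk.injEq] at h
    ext <;> simp [h]

lemma largeEnergies_of_parallel (hκ : 1 ≤ κ) (hA : 2 * κ ≤ #A)
    (hG : ∀ l ∈ G, (#A : ℝ) ≤ κ * gridCount A l) (hAn : #A ≤ n) (hQ : 1 ≤ Q) (hn : n ≤ Q * #G)
    {m : F} (hm0 : m ≠ 0) (hm : ∀ l ∈ G, l.1 = m) :
    LargeEnergies (energy fun z : F × F => z.1 - z.2) A (G.image Prod.snd) #A n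
      ((4 * κ ^ 2) ^ 2 * Q ^ 4) := by
  have hinj : Set.InjOn Prod.snd (G : Set (F × F)) := fun l hl l' hl' h =>
    Prod.ext ((hm l hl).trans (hm l' hl').symm) h
  rw [← card_image_of_injOn hinj] at hn
  refine largeEnergies_energy (fun y _ => sub_left_injective.injOn)
    (fun y _ => sub_left_injective.injOn) (by linarith) le_rfl hAn hQ hn (by nlinarith) ?_
  rw [card_image_of_injOn hinj]
  refine (sq_card_mul_card_le_collisions_of_injOn (f := fun z => z.1 - z.2)
    (A' := A.image fun a => m * a) (by linarith) hA hG 0 (fun y => (lineEval y.1 y.2, y.1.2)) ?_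
    (fun l hl x hx _ hlx => ⟨mk_mem_product hlx (mem_image_of_mem _ hl), ?_⟩)
    card_image_le).trans (by gcongr; exact collisions_sub_le_energy _ _)
  · rintro ⟨l, x⟩ hl ⟨l', x'⟩ hl' h
    simp only [Prod.mk.injEq] at h
    obtain rfl := hinj hl hl' h.2
    have hl0 : l.1 ≠ 0 := (hm l hl).symm ▸ hm0
    rw [mul_left_cancel₀ hl0 (add_right_cancel h.1)]
  · simpa [lineEval, hm l hl] using mem_image_of_mem (fun a => m * a) hx

lemma largeEnergies_of_concurrent (hκ : 1 ≤ κ) (hA : 2 * κ ≤ #A)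
    (hG : ∀ l ∈ G, (#A : ℝ) ≤ κ * gridCount A l) (h0 : ∀ l ∈ G, l.1 ≠ 0) (hAn : #A ≤ n)
    (hQ : 1 ≤ Q) (hn : n ≤ Q * #G) {x₀ y₀ : F} (hxy : ∀ l ∈ G, lineEval l x₀ = y₀) :
    LargeEnergies (energy fun z : F × F => z.1 / z.2) ((A.image fun a => a - x₀).erase 0)
      (G.image Prod.fst) #A n ((4 * κ ^ 2) ^ 2 * Q ^ 4) := by
  set X := (A.image fun a => a - x₀).erase 0
  have hX0 : 0 ∉ X := notMem_erase _ _
  have hY0 : 0 ∉ G.image Prod.fst := fun h => by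
    obtain ⟨l, hl, hl0⟩ := mem_image.mp h
    exact h0 l hl hl0
  have div_injOn {Y : Finset F} (hY : 0 ∉ Y) (y) (hy : y ∈ Y) : Set.InjOn (fun x => x / y) Y :=
    fun _ _ _ _ h => (div_left_inj' (ne_of_mem_of_not_mem hy hY)).mp h
  have hinj : Set.InjOn Prod.fst (G : Set (F × F)) := fun l hl l' hl' h => by
    have h' := (hxy l hl).trans (hxy l' hl').symm
    rw [lineEval, lineEval, h] at h'
    exact Prod.ext h (add_left_cancel h')
  rw [← card_image_of_injOn hinj] at hn
  refine largeEnergies_energy (div_injOn hX0) (div_injOn hY0) (by linarith)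
    (mod_cast (card_erase_le.trans card_image_le)) hAn hQ hn (by nlinarith) ?_
  rw [card_image_of_injOn hinj]
  refine (sq_card_mul_card_le_collisions_of_injOn (f := fun z => z.1 * z.2)
    (A' := A.image fun a => a - y₀) (by linarith) hA hG x₀ (fun y => (y.2 - x₀, y.1.1)) ?_
    (fun l hl x hx hne hlx => ⟨mk_mem_product (mem_erase.mpr ⟨sub_ne_zero.mpr hne,
      mem_image_of_mem _ hx⟩) (mem_image_of_mem _ hl), ?_⟩)
    card_image_le).trans (by gcongr; exact collisions_mul_le_energy hX0 hY0)
  · rintro ⟨l, x⟩ hl ⟨l', x'⟩ hl' h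
    simp only [Prod.mk.injEq, sub_left_inj] at h
    exact Prod.ext (hinj hl hl' h.2) h.1
  · refine mem_image.mpr ⟨_, hlx, ?_⟩
    rw [← hxy l hl, lineEval, lineEval]
    ring

end Pencils

section PrimeFieldLines

variable {p : ℕ} [Fact p.Prime] {A : Finset (ZMod p)} {L : Finset (ZMod p × ZMod p)} {K : ℝ}

lemma inc_le_sum_gridCount (A : Finset (ZMod p)) (L : Finset (ZMod p × ZMod p)) :
    inc p A A L ≤ ∑ l ∈ L, gridCount A l := by
  rw [sum_gridCount L (fun l => l), ← Set.ncard_coe_finset, inc]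
  refine Set.ncard_le_ncard_of_injOn (fun z => (z.2, z.1.1)) ?_ ?_ (Set.toFinite _)
  · rintro z ⟨hx, hy, hl, hz⟩
    exact mem_coe.mpr (mem_filter.mpr ⟨mk_mem_product hl hx, by rwa [lineEval, ← hz]⟩)
  · rintro z ⟨-, -, -, hz⟩ w ⟨-, -, -, hw⟩ h
    obtain ⟨hl, hx⟩ := Prod.mk.inj h
    exact Prod.ext (Prod.ext hx (by rw [hz, hw, hl, hx])) hl

lemma exists_collinear_of_rich (hK : 1 ≤ K) (h0 : ∀ l ∈ L, l.1 ≠ 0)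
    (hL : ∀ l ∈ L, (#A : ℝ) ≤ K * gridCount A l) (hLne : L.Nonempty) (hAL : (#A : ℝ) ≤ K * #L)
    (hA : 4 * K ^ 2 ≤ #A) (hp : 4 * K ^ 2 * #A ≤ p) :
    ∃ G ⊆ L, Collinear (ZMod p) (G : Set (ZMod p × ZMod p)) ∧
      (#L : ℝ) ≤ 160000 * (10240000 * K ^ 13) ^ 3 * #G := by
  classical
  have hA0 : (0 : ℝ) < #A := lt_of_lt_of_le (by positivity) hA
  have hcard : (Fintype.card (ZMod p) : ℝ) = p := by rw [ZMod.card]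
  have hLp : (#L : ℝ) ≤ 10240000 * K ^ 13 * p := by
    calc (#L : ℝ) ≤ 4 * K ^ 2 * p := hcard ▸ card_le_of_rich_of_finite (by linarith)
          (card_pos.mp (mod_cast hA0)) hL (hcard ▸ hp.trans' (by gcongr <;> nlinarith))
      _ ≤ 10240000 * K ^ 13 * p := by gcongr <;> norm_num
  obtain ⟨G, hG, hmax⟩ := exists_max_image
    (L.powerset.filter fun G : Finset _ => Collinear (ZMod p) (G : Set (ZMod p × ZMod p))) card
    ⟨∅, mem_filter.mpr ⟨empty_mem_powerset L, by simpa using collinear_empty _ _⟩⟩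
  rw [mem_filter, mem_powerset] at hG
  exact ⟨G, hG.1, hG.2, card_le_of_collisions_lineQuot p
    (by linarith [one_le_pow₀ (n := 13) hK]) h0 hLne
    (card_cube_le_collisions_lineQuot hK h0 hL hLne hAL hA hp) hLp
    fun G' hG' hcol => hmax G' (mem_filter.mpr ⟨mem_powerset.mpr hG', hcol⟩)⟩

end PrimeFieldLines

section EnergiesModP

variable {p : ℕ} [Fact p.Prime] {A B A' B' : Finset (ZMod p)}

lemma energy_le_ncard {α β : Type*} [Finite α] [DecidableEq β] {q : α × α → β} {X Y : Finset α}
    {S : Set (α × α × α × α)} (h : ∀ x ∈ X, ∀ x' ∈ X, ∀ y ∈ Y, ∀ y' ∈ Y,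
      q (x, x') = q (y, y') → (x, x', y, y') ∈ S) : energy q X Y ≤ S.ncard := by
  rw [energy, ← Set.ncard_coe_finset]
  refine Set.ncard_le_ncard_of_injOn (fun z => (z.1.1, z.1.2, z.2)) ?_ ?_ (Set.toFinite _)
  · rintro ⟨⟨x, x'⟩, y, y'⟩ hz
    simp only [mem_coe, mem_filter, mem_product] at hz
    exact h x hz.1.1.1 x' hz.1.1.2 y hz.1.2.1 y' hz.1.2.2 hz.2
  · intro z _ w _ h
    simp only [Prod.mk.injEq] at h
    ext <;> simp [h]

lemma energy_sub_le_addE (hA : A' ⊆ A) (hB : B' ⊆ B) :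
    energy (fun z => z.1 - z.2) A' B' ≤ addE p A B :=
  energy_le_ncard fun _ hx _ hx' _ hy _ hy' h =>
    ⟨hA hx, hA hx', hB hy, hB hy', by linear_combination h⟩

lemma energy_div_le_mulE (hA : A' ⊆ A) (hB : B' ⊆ B) (hA0 : 0 ∉ A') (hB0 : 0 ∉ B') :
    energy (fun z => z.1 / z.2) A' B' ≤ mulE p A B := by
  refine energy_le_ncard fun x hx x' hx' y hy y' hy' h => ⟨hA hx, hA hx', hB hy, hB hy', ?_⟩
  rw [div_eq_div_iff (ne_of_mem_of_not_mem hx' hA0) (ne_of_mem_of_not_mem hy' hB0)] at h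
  linear_combination h

variable {L G : Finset (ZMod p × ZMod p)} {κ Q : ℝ}

lemma largeEnergies_of_collinear_subset (hκ : 1 ≤ κ) (hA : 2 * κ ≤ #A)
    (hG : ∀ l ∈ G, (#A : ℝ) ≤ κ * gridCount A l) (hGL : G ⊆ L) (h0 : ∀ l ∈ L, l.1 ≠ 0)
    (hAL : #A ≤ #L) (hQ : 1 ≤ Q) (hLG : #L ≤ Q * #G)
    (hcol : Collinear (ZMod p) (G : Set (ZMod p × ZMod p))) :
    LargeEnergies (addE p) A (L.image Prod.snd) #A #L ((4 * κ ^ 2) ^ 2 * Q ^ 4) ∨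
      ∃ s, LargeEnergies (mulE p) (A.image fun a => a - s) (L.image Prod.fst) #A #L
        ((4 * κ ^ 2) ^ 2 * Q ^ 4) := by
  have hAL' : (#A : ℝ) ≤ #L := mod_cast hAL
  have hGne : G.Nonempty := by
    by_contra hG
    simp only [not_nonempty_iff_eq_empty.mp hG, card_empty, Nat.cast_zero, mul_zero] at hLG
    linarith
  obtain ⟨m, hm⟩ | ⟨s, y₀, hs⟩ := parallel_or_concurrent_of_collinear hcol
  · obtain ⟨l, hl⟩ := hGne
    have hGL' : G.image Prod.snd ⊆ L.image Prod.snd := image_subset_image hGL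
    exact .inl <| (largeEnergies_of_parallel hκ hA hG hAL' hQ hLG (hm l hl ▸ h0 l (hGL hl))
      hm).mono (by positivity) (energy_sub_le_addE subset_rfl subset_rfl)
        (energy_sub_le_addE hGL' hGL') (energy_sub_le_addE subset_rfl hGL')
  · have hGL' : G.image Prod.fst ⊆ L.image Prod.fst := image_subset_image hGL
    have hX : (A.image fun a => a - s).erase 0 ⊆ A.image fun a => a - s := erase_subset _ _
    have hX0 : 0 ∉ (A.image fun a => a - s).erase 0 := notMem_erase _ _
    have hY0 : 0 ∉ G.image Prod.fst := fun h => by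
      obtain ⟨l, hl, hl0⟩ := mem_image.mp h
      exact h0 l (hGL hl) hl0
    exact .inr ⟨s, (largeEnergies_of_concurrent hκ hA hG (fun l hl => h0 l (hGL hl)) hAL' hQ hLG
      hs).mono (by positivity) (energy_div_le_mulE hX hX hX0 hX0)
        (energy_div_le_mulE hGL' hGL' hY0 hY0) (energy_div_le_mulE hX hGL' hX0 hY0)⟩

end EnergiesModP

section Conclusion

variable {p : ℕ} [Fact p.Prime] {A : Finset (ZMod p)} {L : Finset (ZMod p × ZMod p)} {K : ℝ}

/-- The constant `C` of the theorem; it serves both as the factor and as the exponent of `K`. -/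
def lossConstant : ℝ := 16 * 2 ^ 164 * (160000 * 10240000 ^ 3) ^ 4

lemma largeEnergies_of_inc (hK : 1 ≤ K) (h0 : ∀ l ∈ L, l.1 ≠ 0) (hAL : #A ≤ #L)
    (hI : (#A : ℝ) * #L / K ≤ inc p A A L) (hA : 16 * K ^ 2 ≤ #A) (hp : 16 * K ^ 2 * #A ≤ p) :
    LargeEnergies (addE p) A (L.image Prod.snd) #A #L (lossConstant * K ^ 164) ∨
      ∃ s, LargeEnergies (mulE p) (A.image fun a => a - s) (L.image Prod.fst) #A #L
        (lossConstant * K ^ 164) := by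
  have hA0 : (0 : ℝ) < #A := lt_of_lt_of_le (by positivity) hA
  have hAL' : (#A : ℝ) ≤ #L := mod_cast hAL
  have hK2 : 1 ≤ 2 * K := by linarith
  set R := ({l ∈ L | (#A : ℝ) ≤ 2 * K * gridCount A l} : Finset (ZMod p × ZMod p))
  have hRL : R ⊆ L := filter_subset _ _
  have hR (l) (hl : l ∈ R) : (#A : ℝ) ≤ 2 * K * gridCount A l := (mem_filter.mp hl).2
  have hLR : (#L : ℝ) ≤ 2 * K * #R :=
    card_le_two_mul_card_filter (f := fun l => (gridCount A l : ℝ)) hA0 (by linarith)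
      (fun l _ => Nat.cast_le.mpr (gridCount_le A l))
      (hI.trans (mod_cast inc_le_sum_gridCount A L))
  have hRne : R.Nonempty := by
    by_contra hR
    simp only [not_nonempty_iff_eq_empty.mp hR, card_empty, Nat.cast_zero, mul_zero] at hLR
    linarith
  obtain ⟨G, hGR, hcol, hRG⟩ := exists_collinear_of_rich hK2 (fun l hl => h0 l (hRL hl)) hR hRne
    (hAL'.trans hLR) (by linarith) (by linarith)
  set Q := 160000 * (10240000 * (2 * K) ^ 13) ^ 3 * (2 * K) with hQ
  have hQ1 : 1 ≤ Q := by
    have hK13 : 1 ≤ 10240000 * (2 * K) ^ 13 := by linarith [one_le_pow₀ (n := 13) hK2]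
    exact one_le_mul_of_one_le_of_one_le (by linarith [one_le_pow₀ (n := 3) hK13]) hK2
  have hLG : #L ≤ Q * #G := by
    calc (#L : ℝ) ≤ 2 * K * (160000 * (10240000 * (2 * K) ^ 13) ^ 3 * #G) :=
          hLR.trans (by gcongr)
      _ = Q * #G := by ring
  have hloss : (4 * (2 * K) ^ 2) ^ 2 * Q ^ 4 = lossConstant * K ^ 164 := by
    rw [hQ, lossConstant]; ring
  exact hloss ▸ largeEnergies_of_collinear_subset hK2 (by nlinarith)
    (fun l hl => hR l (hGR hl)) (hGR.trans hRL) h0 hAL hQ1 hLG hcol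

lemma sq_le_card_and_sq_mul_card_le {a n q : ℝ} (ha : 0 < a) (hn : 0 < n) (hq : 0 < q) (hK : 0 < K)
    (h : 4 * a ^ ((1 : ℝ) / 2) * n * max 1 (a / q ^ ((1 : ℝ) / 2)) ≤ a * n / K) :
    16 * K ^ 2 ≤ a ∧ 16 * K ^ 2 * a ≤ q := by
  rw [← Real.sqrt_eq_rpow, ← Real.sqrt_eq_rpow] at h
  have hsa : 0 < √a := Real.sqrt_pos.mpr ha
  have hsq : 0 < √q := Real.sqrt_pos.mpr hq
  have sq_a : √a ^ 2 = a := Real.sq_sqrt ha.le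
  have hmax : 4 * K * max 1 (a / √q) ≤ √a := by
    rw [le_div_iff₀ hK] at h
    refine le_of_mul_le_mul_right ?_ (show 0 < √a * n by positivity)
    calc 4 * K * max 1 (a / √q) * (√a * n) = 4 * √a * n * max 1 (a / √q) * K := by ring
      _ ≤ a * n := h
      _ = √a * (√a * n) := by rw [← mul_assoc, ← sq, sq_a]
  have hone : 4 * K ≤ √a := by
    calc 4 * K = 4 * K * 1 := (mul_one _).symm
      _ ≤ 4 * K * max 1 (a / √q) := by gcongr; exact le_max_left _ _
      _ ≤ √a := hmax
  have hsqrt : 4 * K * √a ≤ √q := by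
    refine le_of_mul_le_mul_right ?_ (show 0 < √a / √q by positivity)
    calc 4 * K * √a * (√a / √q) = 4 * K * (a / √q) := by linear_combination 4 * K / √q * sq_a
      _ ≤ 4 * K * max 1 (a / √q) := by gcongr; exact le_max_right _ _
      _ ≤ √a := hmax
      _ = √q * (√a / √q) := by field_simp
  constructor
  · calc 16 * K ^ 2 = (4 * K) ^ 2 := by ring
      _ ≤ √a ^ 2 := by gcongr
      _ = a := sq_a
  · calc 16 * K ^ 2 * a = (4 * K * √a) ^ 2 := by rw [mul_pow, sq_a]; ring
      _ ≤ √q ^ 2 := by gcongr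
      _ = q := Real.sq_sqrt hq.le

lemma LargeEnergies.div_le {α : Type*} {E : Finset α → Finset α → ℕ} {X Y : Finset α} {a n : ℝ}
    (hK : 1 ≤ K) (h : LargeEnergies E X Y a n (lossConstant * K ^ 164)) :
    a ^ 3 / (lossConstant * K ^ lossConstant) ≤ E X X ∧
      a * n ^ 2 / (lossConstant * K ^ lossConstant) ≤ E Y Y ∧
      a * n ^ 2 / (lossConstant * K ^ lossConstant) ≤ E X Y := by
  have hC : (164 : ℝ) ≤ lossConstant := by norm_num [lossConstant]
  have hpow : K ^ 164 ≤ K ^ lossConstant := by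
    rw [← Real.rpow_natCast]
    exact Real.rpow_le_rpow_of_exponent_le hK (mod_cast hC)
  have div_le {x : ℝ} {e : ℕ} (hx : x ≤ lossConstant * K ^ 164 * e) :
      x / (lossConstant * K ^ lossConstant) ≤ e := by
    rw [div_le_iff₀' (by positivity)]
    exact hx.trans (by gcongr)
  exact ⟨div_le h.1, div_le h.2.1, div_le h.2.2⟩

end Conclusion

end IncidenceStructure

/-- **Corollary 3.7** (structure from many incidences): there are absolute constants
`C₀, C ≥ 1` such that for every prime `p`, finite nonempty `A ⊆ F_p`, `K ≥ 1` and set `L`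
of lines with nonzero slopes, `|L| ≥ |A|`, if `I(A×A, L) ≥ |A||L|/K` and
`|A||L|/K ≥ C₀·|A|^{1/2}|L|·max{1, |A|/√p}`, then (with `B` the set of y-intercepts and
`D` the set of slopes of `L`) either `E⁺(A) ≥ |A|³/(CK^C)`, `E⁺(B) ≥ |A||L|²/(CK^C)` and
`E⁺(A,B) ≥ |A||L|²/(CK^C)`; or there is `s` with `E^×(A−s) ≥ |A|³/(CK^C)`,
`E^×(D) ≥ |A||L|²/(CK^C)` and `E^×(A−s,D) ≥ |A||L|²/(CK^C)`. -/
theorem incidence_structure :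
    ∃ C₀ C : ℝ, 1 ≤ C₀ ∧ 1 ≤ C ∧
      ∀ (p : ℕ), p.Prime →
        ∀ A : Finset (ZMod p), A.Nonempty →
          ∀ K : ℝ, 1 ≤ K →
            ∀ L : Finset (ZMod p × ZMod p),
              (∀ l ∈ L, l.1 ≠ 0) →
              A.card ≤ L.card →
              (A.card : ℝ) * (L.card : ℝ) / K ≤ (inc p A A L : ℝ) →
              C₀ * (A.card : ℝ) ^ ((1 : ℝ) / 2) * (L.card : ℝ) *
                  max 1 ((A.card : ℝ) / (p : ℝ) ^ ((1 : ℝ) / 2))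
                ≤ (A.card : ℝ) * (L.card : ℝ) / K →
              (((A.card : ℝ) ^ 3 / (C * K ^ C) ≤ (addE p A A : ℝ) ∧
                (A.card : ℝ) * (L.card : ℝ) ^ 2 / (C * K ^ C) ≤
                  (addE p (L.image Prod.snd) (L.image Prod.snd) : ℝ) ∧
                (A.card : ℝ) * (L.card : ℝ) ^ 2 / (C * K ^ C) ≤
                  (addE p A (L.image Prod.snd) : ℝ)) ∨
              (∃ s : ZMod p,
                (A.card : ℝ) ^ 3 / (C * K ^ C) ≤
                  (mulE p (A.image fun a => a - s) (A.image fun a => a - s) : ℝ) ∧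
                (A.card : ℝ) * (L.card : ℝ) ^ 2 / (C * K ^ C) ≤
                  (mulE p (L.image Prod.fst) (L.image Prod.fst) : ℝ) ∧
                (A.card : ℝ) * (L.card : ℝ) ^ 2 / (C * K ^ C) ≤
                  (mulE p (A.image fun a => a - s) (L.image Prod.fst) : ℝ))) := by
  refine ⟨4, IncidenceStructure.lossConstant, by norm_num,
    by norm_num [IncidenceStructure.lossConstant], ?_⟩
  intro p hp A hA K hK L h0 hAL hI hbig
  have : Fact p.Prime := ⟨hp⟩
  have hA0 : (0 : ℝ) < A.card := mod_cast hA.card_pos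
  have hL0 : (0 : ℝ) < L.card := hA0.trans_le (mod_cast hAL)
  obtain ⟨hKA, hKp⟩ := IncidenceStructure.sq_le_card_and_sq_mul_card_le hA0 hL0
    (mod_cast hp.pos) (by linarith) hbig
  obtain hadd | ⟨s, hmul⟩ := IncidenceStructure.largeEnergies_of_inc hK h0 hAL hI hKA hKp
  · exact .inl (hadd.div_le hK)
  · exact .inr ⟨s, hmul.div_le hK⟩
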